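/- The sequence of functionals {I_ε}_{ε∈(0,1]} is equicoercive on (𝒰, d_𝒰): for each M>0 there exists a compact set K_M⊂𝒰 such that {u∈𝒰 : I_ε(u)≤M}⊂K_M for every ε∈(0,1]. -/

import Mathlib

/-!
The compact set is described by a modulus of continuity in time of the primitives
`U(t, x) = ∫₀ˣ u(t, y) dy`.

Testing `I_ε(u) ≤ M` with a product `χ(t) ψ(x)` bounds `-∫ χ'(t) ⟨u(t), ψ⟩ dt`. The flux and the
mobility contribute terms bounded by means of `sup |f|` and `sup |σ|`. The diffusive term involves
`u_x`, on which there is no bound uniform in `ε`; however `D(u) u_x = d(u)_x` with `d` a primitive of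
`D`, so one more integration by parts in `x` moves the derivative onto `ψ` (`diff_term`; the chain
rule is proved on almost every time slice, where `u` is absolutely continuous). Hence the bound
(`sublevel_test`) depends neither on `u` nor on `ε ∈ (0, 1]`.

Taking `χ` to be `K` times a smoothed indicator of `[s, t]` and dividing by `K` gives
`|⟨u(t), ψ⟩ - ⟨u(s), ψ⟩| ≤ M / K + (C₁ + C₂ K) |t - s|`; a large `K` followed by a small `|t - s|` makes
this as small as desired (`modulus_pairing`). With `ψ` a smoothed indicator of `[0, x]` this becomes
a modulus of continuity in time for `U(·, x)`, uniform over the sublevel sets (`modulus_prim`).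

In space the functions `U(t, ·)` are nondecreasing, `1`-Lipschitz and vanish at `0`, so
Arzelà–Ascoli applies to the class of functions with these properties and the given time modulus
(`primClass_compact`). The spatial derivative of a limit has values in `[0, 1]` and is an element of
`𝒰` (`limitOf`), and locally uniform convergence of primitives implies convergence in `d_𝒰`, because
`d_U` is controlled by primitives on a large interval (`dU_le_of_prim`).
-/

open MeasureTheory Set Filter Topology
open scoped ENNReal Classical

noncomputable section

namespace GammaSCL

/-! ### Spatial test functions and the metric on `U` -/

/-- Smooth compactly supported test functions on `ℝ`, supported in `(-N, N)`. -/
structure STest (N : ℝ) where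
  toFun : ℝ → ℝ
  smooth : ContDiff ℝ (⊤ : ℕ∞) toFun
  cpt : HasCompactSupport toFun
  supp : Function.support toFun ⊆ Ioo (-N) N

/-- The negative Sobolev seminorm `‖w‖_{-1,N}`. -/
def negNorm (N : ℝ) (w : ℝ → ℝ) : ℝ :=
  sSup { r : ℝ | ∃ φ : STest N, (∫ x, deriv φ.toFun x ^ 2) = 1 ∧ r = ∫ x, w x * φ.toFun x }

/-- The metric `d_U` on the space `U` of measurable `[0,1]`-valued functions. -/
def dU (u v : ℝ → ℝ) : ℝ :=
  ∑' n : ℕ, (2 : ℝ)⁻¹ ^ (n + 1) *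
    (negNorm ((n : ℝ) + 1) (fun x => u x - v x) /
      (1 + negNorm ((n : ℝ) + 1) (fun x => u x - v x)))

/-- The space `𝒰 = C([0,T]; U)`. -/
structure cU (T : ℝ) where
  toFun : ℝ × ℝ → ℝ
  meas : Measurable toFun
  mem01 : ∀ p, toFun p ∈ Icc (0:ℝ) 1
  cont : ∀ t₀ ∈ Icc (0:ℝ) T, ∀ δ > 0, ∃ ζ > 0, ∀ t ∈ Icc (0:ℝ) T,
    |t - t₀| < ζ → dU (fun x => toFun (t, x)) (fun x => toFun (t₀, x)) < δ

/-- The uniform metric `d_𝒰` on `𝒰`. -/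
def dcU (T : ℝ) (u v : cU T) : ℝ :=
  sSup { r : ℝ | ∃ t ∈ Icc (0:ℝ) T,
    r = dU (fun x => u.toFun (t, x)) (fun x => v.toFun (t, x)) }

/-- The metric `d_𝒳` on `𝒳`. -/
def dX (T : ℝ) (u v : cU T) : ℝ :=
  (∑' n : ℕ, (2 : ℝ)⁻¹ ^ (n + 1) *
    ∫ p in Icc (0:ℝ) T ×ˢ Icc (-((n : ℝ) + 1)) ((n : ℝ) + 1), |u.toFun p - v.toFun p|) +
  dcU T u v

/-! ### Space-time test functions -/

/-- Smooth test functions compactly supported in `(0,T) × ℝ`. -/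
structure TTest (T : ℝ) where
  toFun : ℝ × ℝ → ℝ
  smooth : ContDiff ℝ (⊤ : ℕ∞) toFun
  cpt : HasCompactSupport toFun
  supp : Function.support toFun ⊆ Ioo (0 : ℝ) T ×ˢ (univ : Set ℝ)

/-- Smooth test functions compactly supported in `[0,T] × ℝ` (no vanishing at `t = 0, T`). -/
structure TTestC where
  toFun : ℝ × ℝ → ℝ
  smooth : ContDiff ℝ (⊤ : ℕ∞) toFun
  cpt : HasCompactSupport toFun

/-- Partial derivative in `t`. -/
def ptF (ψ : ℝ × ℝ → ℝ) : ℝ × ℝ → ℝ := fun p => fderiv ℝ ψ p (1, 0)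
/-- Partial derivative in `x`. -/
def pxF (ψ : ℝ × ℝ → ℝ) : ℝ × ℝ → ℝ := fun p => fderiv ℝ ψ p (0, 1)

/-- The `L²([0,T] × ℝ)` inner product `⟨⟨g, h⟩⟩`. -/
def pair (T : ℝ) (g h : ℝ × ℝ → ℝ) : ℝ :=
  ∫ p in Icc (0:ℝ) T ×ˢ (univ : Set ℝ), g p * h p

/-! ### Weak derivatives -/

/-- Locally square integrable on `[0,T] × ℝ`. -/
def L2loc (T : ℝ) (w : ℝ × ℝ → ℝ) : Prop :=
  Measurable w ∧ ∀ R > 0, IntegrableOn (fun p => w p ^ 2) (Icc (0:ℝ) T ×ˢ Icc (-R) R)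

/-- `w` is the weak `x`-derivative of `u`. -/
def HasWeakDx (T : ℝ) (u w : ℝ × ℝ → ℝ) : Prop :=
  ∀ φ : TTest T, pair T u (pxF φ.toFun) = - pair T w φ.toFun

/-- `u` admits a locally square integrable weak `x`-derivative. -/
def hasDx (T : ℝ) (u : ℝ × ℝ → ℝ) : Prop := ∃ w, L2loc T w ∧ HasWeakDx T u w

/-- A choice of weak `x`-derivative. -/
def wDx (T : ℝ) (u : ℝ × ℝ → ℝ) : ℝ × ℝ → ℝ :=
  if h : hasDx T u then h.choose else 0

/-! ### The parabolic cost functional -/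

/-- The expression inside the supremum defining `I_ε`. -/
def IexprW (f D σ : ℝ → ℝ) (T ε : ℝ) (u w : ℝ × ℝ → ℝ) (φ : TTest T) : ℝ :=
  - pair T u (ptF φ.toFun) - pair T (fun p => f (u p)) (pxF φ.toFun)
    + ε / 2 * pair T (fun p => D (u p) * w p) (pxF φ.toFun)
    - 1 / 2 * pair T (fun p => σ (u p) * pxF φ.toFun p) (pxF φ.toFun)

/-- The cost functional `I_ε : 𝒰 → [0,+∞]`. -/
def Ieps (f D σ : ℝ → ℝ) (T ε : ℝ) (u : cU T) : ℝ≥0∞ :=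
  if hasDx T u.toFun then
    ⨆ φ : TTest T, ENNReal.ofReal (IexprW f D σ T ε u.toFun (wDx T u.toFun) φ)
  else ⊤

/-- The rescaled cost functional `H_ε := ε⁻¹ I_ε`. -/
def Heps (f D σ : ℝ → ℝ) (T ε : ℝ) (u : cU T) : ℝ≥0∞ :=
  ENNReal.ofReal ε⁻¹ * Ieps f D σ T ε u

/-! ### Young measures -/

/-- The space `𝓜` of Young measures. -/
structure YM (T : ℝ) where
  m : ℝ × ℝ → Measure ℝ
  prob : ∀ p, IsProbabilityMeasure (m p)
  supp01 : ∀ p, m p (Icc (0:ℝ) 1)ᶜ = 0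
  meas : ∀ F : ℝ → ℝ, Continuous F → Measurable fun p => ∫ l, F l ∂ m p
  bar_mem : ∀ p, (∫ l, l ∂ m p) ∈ Icc (0:ℝ) 1
  bar_cont : ∀ t₀ ∈ Icc (0:ℝ) T, ∀ δ > 0, ∃ ζ > 0, ∀ t ∈ Icc (0:ℝ) T,
    |t - t₀| < ζ →
      dU (fun x => ∫ l, l ∂ m (t, x)) (fun x => ∫ l, l ∂ m (t₀, x)) < δ

/-- The moment `μ(F)`. -/
def YM.mom {T : ℝ} (μ : YM T) (F : ℝ → ℝ) : ℝ × ℝ → ℝ := fun p => ∫ l, F l ∂ μ.m p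

/-- The barycenter `μ(ι)` of a Young measure, as an element of `𝒰`. -/
def YM.bar {T : ℝ} (μ : YM T) : cU T :=
  ⟨fun p => ∫ l, l ∂ μ.m p, μ.meas (fun l => l) continuous_id', μ.bar_mem, μ.bar_cont⟩

/-- The metric `d_𝓜 = d_w + d_𝒰(μ(ι), ν(ι))`. -/
def dM (T : ℝ) (dw : YM T → YM T → ℝ) (μ ν : YM T) : ℝ :=
  dw μ ν + dcU T μ.bar ν.bar

/-- `dw` is a distance generating the weak* topology on Young measures. -/
def GeneratesWeakStar (T : ℝ) (dw : YM T → YM T → ℝ) : Prop :=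
  (∀ μ ν, dw μ ν = dw ν μ) ∧ (∀ μ ν, 0 ≤ dw μ ν) ∧
  ∀ (μ : ℕ → YM T) (ν : YM T),
    Tendsto (fun n => dw (μ n) ν) atTop (𝓝 0) ↔
      ∀ g : ℝ × (ℝ × ℝ) → ℝ, Continuous g → HasCompactSupport g →
        Tendsto
          (fun n => ∫ p in Icc (0:ℝ) T ×ˢ (univ : Set ℝ), ∫ l, g (l, p) ∂ (μ n).m p)
          atTop
          (𝓝 (∫ p in Icc (0:ℝ) T ×ˢ (univ : Set ℝ), ∫ l, g (l, p) ∂ ν.m p))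

/-- The lift `𝓘_ε` of `I_ε` to Young measures. -/
def calIeps (f D σ : ℝ → ℝ) (T ε : ℝ) (μ : YM T) : ℝ≥0∞ :=
  if h : ∃ u : cU T, ∀ p, μ.m p = Measure.dirac (u.toFun p) then
    Ieps f D σ T ε h.choose
  else ⊤

/-- The limiting functional `𝓘` on Young measures. -/
def calI (f σ : ℝ → ℝ) (T : ℝ) (μ : YM T) : ℝ≥0∞ :=
  ⨆ φ : TTest T, ENNReal.ofReal
    (- pair T (μ.mom (fun l => l)) (ptF φ.toFun) - pair T (μ.mom f) (pxF φ.toFun)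
      - 1 / 2 * pair T (fun p => μ.mom σ p * pxF φ.toFun p) (pxF φ.toFun))

/-! ### Γ-convergence via sequences -/

/-- Sequential compactness with respect to a distance function. -/
def SeqCompactIn {α : Type*} (d : α → α → ℝ) (K : Set α) : Prop :=
  ∀ x : ℕ → α, (∀ n, x n ∈ K) → ∃ y ∈ K, ∃ s : ℕ → ℕ, StrictMono s ∧
    Tendsto (fun n => d (x (s n)) y) atTop (𝓝 0)

/-- Equicoercivity of a family of functionals. -/
def Equicoercive {α : Type*} (d : α → α → ℝ) (F : ℝ → α → ℝ≥0∞) : Prop :=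
  ∀ M : ℝ, 0 < M → ∃ K : Set α, SeqCompactIn d K ∧
    ∀ ε ∈ Ioc (0:ℝ) 1, { x : α | F ε x ≤ ENNReal.ofReal M } ⊆ K

/-- The Γ-liminf inequality `Γ-liminf F_ε ≥ G`. -/
def GammaLiminfGE {α : Type*} (d : α → α → ℝ) (F : ℝ → α → ℝ≥0∞) (G : α → ℝ≥0∞) : Prop :=
  ∀ (x : α) (e : ℕ → ℝ) (xs : ℕ → α), (∀ n, 0 < e n) → Tendsto e atTop (𝓝 0) →
    Tendsto (fun n => d (xs n) x) atTop (𝓝 0) →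
    G x ≤ Filter.liminf (fun n => F (e n) (xs n)) atTop

/-- The Γ-limsup inequality `Γ-limsup F_ε ≤ G`. -/
def GammaLimsupLE {α : Type*} (d : α → α → ℝ) (F : ℝ → α → ℝ≥0∞) (G : α → ℝ≥0∞) : Prop :=
  ∀ (x : α) (e : ℕ → ℝ), (∀ n, 0 < e n) → Tendsto e atTop (𝓝 0) →
    ∃ xs : ℕ → α, Tendsto (fun n => d (xs n) x) atTop (𝓝 0) ∧
      Filter.limsup (fun n => F (e n) (xs n)) atTop ≤ G x

/-- Γ-convergence of `F_ε` to `G`. -/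
def GammaConvergesTo {α : Type*} (d : α → α → ℝ) (F : ℝ → α → ℝ≥0∞) (G : α → ℝ≥0∞) : Prop :=
  GammaLiminfGE d F G ∧ GammaLimsupLE d F G

/-! ### Entropies, entropy production, kinetic measures -/

/-- Weak solutions to `u_t + f(u)_x = 0`. -/
def IsWeakSolution (f : ℝ → ℝ) (T : ℝ) (u : ℝ × ℝ → ℝ) : Prop :=
  ∀ φ : TTest T, pair T u (ptF φ.toFun) + pair T (fun p => f (u p)) (pxF φ.toFun) = 0

/-- Derivative within `[0,1]`. -/
def dIcc (g : ℝ → ℝ) : ℝ → ℝ := fun v => derivWithin g (Icc 0 1) v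

/-- An entropy–entropy flux pair. -/
structure Entropy (f : ℝ → ℝ) where
  eta : ℝ → ℝ
  q : ℝ → ℝ
  smooth : ContDiffOn ℝ 2 eta (Icc 0 1)
  qcont : ContinuousOn q (Icc 0 1)
  flux : ∀ a ∈ Icc (0:ℝ) 1, ∀ b ∈ Icc (0:ℝ) 1,
    q b - q a = ∫ v in a..b, dIcc eta v * deriv f v

/-- The `η`-entropy production `℘_{η,u}(φ)`. -/
def entProd (f : ℝ → ℝ) (T : ℝ) (E : Entropy f) (u : ℝ × ℝ → ℝ) (φ : TTest T) : ℝ :=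
  - pair T (fun p => E.eta (u p)) (ptF φ.toFun) - pair T (fun p => E.q (u p)) (pxF φ.toFun)

/-- `‖℘_{η,u}‖_{TV,L}`. -/
def TVabs (f : ℝ → ℝ) (T : ℝ) (E : Entropy f) (L : ℝ) (u : ℝ × ℝ → ℝ) : ℝ≥0∞ :=
  ⨆ φ : { φ : TTest T // Function.support φ.toFun ⊆ Ioo (0:ℝ) T ×ˢ Ioo (-L) L ∧
          ∀ p, |φ.toFun p| ≤ 1 },
    ENNReal.ofReal (entProd f T E u φ.1)

/-- `‖℘⁺_{η,u}‖_{TV,L}`. -/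
def TVpos (f : ℝ → ℝ) (T : ℝ) (E : Entropy f) (L : ℝ) (u : ℝ × ℝ → ℝ) : ℝ≥0∞ :=
  ⨆ φ : { φ : TTest T // Function.support φ.toFun ⊆ Ioo (0:ℝ) T ×ˢ Ioo (-L) L ∧
          ∀ p, φ.toFun p ∈ Icc (0:ℝ) 1 },
    ENNReal.ofReal (entProd f T E u φ.1)

/-- Entropy-measure solutions: every entropy production extends to a Radon measure. -/
def EMsol (f : ℝ → ℝ) (T : ℝ) (u : cU T) : Prop :=
  IsWeakSolution f T u.toFun ∧ ∀ E : Entropy f, ∀ L > 0, TVabs f T E L u.toFun ≠ ⊤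

/-- `v`-derivative (within `[0,1]`) of a sampler. -/
def dv1 (θ : ℝ → ℝ × ℝ → ℝ) : ℝ → ℝ × ℝ → ℝ :=
  fun v p => derivWithin (fun w => θ w p) (Icc 0 1) v

/-- An entropy sampler together with a conjugated entropy flux sampler. -/
structure Sampler (f : ℝ → ℝ) (T : ℝ) where
  θ : ℝ → ℝ × ℝ → ℝ
  Q : ℝ → ℝ × ℝ → ℝ
  cpt : HasCompactSupport (Function.uncurry θ)
  supp : Function.support (Function.uncurry θ) ⊆
    Icc (0:ℝ) 1 ×ˢ (Ioo (0:ℝ) T ×ˢ (univ : Set ℝ))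
  smooth_p : ∀ v, ContDiff ℝ (⊤ : ℕ∞) (θ v)
  smooth_v : ∀ p, ContDiffOn ℝ 2 (fun v => θ v p) (Icc 0 1)
  cont0 : Continuous (Function.uncurry θ)
  cont1 : ContinuousOn (Function.uncurry (dv1 θ)) (Icc (0:ℝ) 1 ×ˢ (univ : Set (ℝ × ℝ)))
  cont2 : ContinuousOn (Function.uncurry (dv1 (dv1 θ))) (Icc (0:ℝ) 1 ×ˢ (univ : Set (ℝ × ℝ)))
  Qsmooth : ∀ v, ContDiff ℝ 1 (Q v)
  Qflux : ∀ (p : ℝ × ℝ), ∀ a ∈ Icc (0:ℝ) 1, ∀ b ∈ Icc (0:ℝ) 1,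
    Q b p - Q a p = ∫ v in a..b, dv1 θ v p * deriv f v

/-- The `ϑ`-sampled entropy production `P_{ϑ,u}`. -/
def Ptheta (f : ℝ → ℝ) (T : ℝ) (S : Sampler f T) (u : ℝ × ℝ → ℝ) : ℝ :=
  - ∫ p in Icc (0:ℝ) T ×ˢ (univ : Set ℝ),
      (fderiv ℝ (S.θ (u p)) p (1, 0) + fderiv ℝ (S.Q (u p)) p (0, 1))

/-- `(ρp, ρn)` is a decomposition of the kinetic measure `ϱ_u` of a weak solution `u`. -/
def IsKineticMeasure (f : ℝ → ℝ) (T : ℝ) (u : ℝ × ℝ → ℝ)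
    (ρp ρn : ℝ → Measure (ℝ × ℝ)) : Prop :=
  (∀ v, ρp v ((Ioo (0:ℝ) T ×ˢ (univ : Set ℝ))ᶜ) = 0 ∧
        ρn v ((Ioo (0:ℝ) T ×ˢ (univ : Set ℝ))ᶜ) = 0) ∧
  (∀ L > 0, ∃ C : ℝ≥0∞, C ≠ ⊤ ∧ ∀ v ∈ Icc (0:ℝ) 1,
      ρp v (Icc (0:ℝ) T ×ˢ Icc (-L) L) + ρn v (Icc (0:ℝ) T ×ˢ Icc (-L) L) ≤ C) ∧
  (∀ g : ℝ × ℝ → ℝ, Continuous g → HasCompactSupport g →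
      Measurable fun v => (∫ p, g p ∂ ρp v) - ∫ p, g p ∂ ρn v) ∧
  ∀ S : Sampler f T, Ptheta f T S u =
    ∫ v in Icc (0:ℝ) 1,
      ((∫ p, dv1 (dv1 S.θ) v p ∂ ρp v) - ∫ p, dv1 (dv1 S.θ) v p ∂ ρn v)

/-- The Γ-entropy cost functional `H`. -/
def Hfun (f D σ : ℝ → ℝ) (T : ℝ) (u : cU T) : ℝ≥0∞ :=
  if IsWeakSolution f T u.toFun then
    ⨅ ρ : { ρ : (ℝ → Measure (ℝ × ℝ)) × (ℝ → Measure (ℝ × ℝ)) //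
            IsKineticMeasure f T u.toFun ρ.1 ρ.2 },
      ∫⁻ v in Icc (0:ℝ) 1, ENNReal.ofReal (D v / σ v) * ρ.1.1 v univ
  else ⊤

/-- Entropic solutions. -/
def EntropicSol (f : ℝ → ℝ) (T : ℝ) (u : cU T) : Prop :=
  IsWeakSolution f T u.toFun ∧
  ∀ E : Entropy f, (∀ v ∈ Icc (0:ℝ) 1, 0 ≤ dIcc (dIcc E.eta) v) →
    ∀ φ : TTest T, (∀ p, 0 ≤ φ.toFun p) → entProd f T E u.toFun φ ≤ 0

/-- There is no interval in which `f` is affine. -/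
def NoAffinePiece (f : ℝ → ℝ) : Prop :=
  ∀ a b : ℝ, 0 ≤ a → a < b → b ≤ 1 →
    ¬ ∃ c d : ℝ, ∀ v ∈ Icc a b, f v = c * v + d

/-- Entropy-splittable solutions. -/
def Splittable (f : ℝ → ℝ) (T : ℝ) (u : cU T) : Prop :=
  EMsol f T u ∧
  ∃ Ep En : Set (ℝ × ℝ), IsClosed Ep ∧ IsClosed En ∧
    Ep ⊆ Icc (0:ℝ) T ×ˢ (univ : Set ℝ) ∧ En ⊆ Icc (0:ℝ) T ×ˢ (univ : Set ℝ) ∧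
    (∃ ρp ρn : ℝ → Measure (ℝ × ℝ), IsKineticMeasure f T u.toFun ρp ρn ∧
      ∀ᵐ v ∂(volume.restrict (Icc (0:ℝ) 1)), ρp v Epᶜ = 0 ∧ ρn v Enᶜ = 0) ∧
    ∀ L > 0, ∀ a b : ℝ, 0 ≤ a → a < b → b ≤ T →
      ∃ a' b' : ℝ, a ≤ a' ∧ a' < b' ∧ b' ≤ b ∧
        ∀ t ∈ Ioo a' b', ∀ x ∈ Icc (-L) L, (t, x) ∉ Ep ∩ En

/-- Nice solutions with respect to `σ`: the set `𝒮_σ`. -/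
def NiceSol (f D σ : ℝ → ℝ) (T : ℝ) (u : cU T) : Prop :=
  Splittable f T u ∧ Hfun f D σ T u ≠ ⊤ ∧
  ∀ L > 0, ∃ δ > 0,
    ∀ᵐ p ∂(volume.restrict (Icc (0:ℝ) T ×ˢ Icc (-L) L)), δ ≤ σ (u.toFun p)

/-- The relaxed functional `H̄`. -/
def Hbar (f D σ : ℝ → ℝ) (T : ℝ) (u : cU T) : ℝ≥0∞ :=
  ⨅ s : { s : ℕ → cU T // (∀ n, NiceSol f D σ T (s n)) ∧
          Tendsto (fun n => dX T (s n) u) atTop (𝓝 0) },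
    Filter.liminf (fun n => Hfun f D σ T (s.1 n)) atTop

/-- Continuity in time with values in `L¹_loc(ℝ)`. -/
def ContL1 (T : ℝ) (u : ℝ × ℝ → ℝ) : Prop :=
  ∀ t₀ ∈ Icc (0:ℝ) T, ∀ R > 0, ∀ δ > 0, ∃ ζ > 0, ∀ t ∈ Icc (0:ℝ) T,
    |t - t₀| < ζ → (∫ x in Icc (-R) R, |u (t, x) - u (t₀, x)|) < δ

/-! ### The relaxation `R_{f,σ}` and the Γ-limit `I` on `𝒰` -/

/-- The function `R_{f,σ}(w,c)`. -/
def Rfs (f σ : ℝ → ℝ) (w c : ℝ) : ℝ≥0∞ :=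
  ⨅ ν : { ν : Measure ℝ // IsProbabilityMeasure ν ∧ ν (Icc (0:ℝ) 1)ᶜ = 0 ∧ (∫ l, l ∂ν) = w },
    if (∫ l, σ l ∂ν.1) = 0 then (if (∫ l, f l ∂ν.1) = c then 0 else ⊤)
    else ENNReal.ofReal ((∫ l, f l ∂ν.1 - c) ^ 2 / ∫ l, σ l ∂ν.1)

/-- The Γ-limit `I` of `I_ε` on `𝒰`. -/
def Ilim (f σ : ℝ → ℝ) (T : ℝ) (u : cU T) : ℝ≥0∞ :=
  ⨅ Φ : { Φ : ℝ × ℝ → ℝ // L2loc T Φ ∧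
          ∀ φ : TTest T, - pair T Φ (pxF φ.toFun) = pair T u.toFun (ptF φ.toFun) },
    ∫⁻ p in Icc (0:ℝ) T ×ˢ (univ : Set ℝ), Rfs f σ (u.toFun p) (Φ.1 p)

/-! ### The classes `𝓜_g` and `𝓜₀` -/

/-- The class `𝓜_g`. -/
def Mg (f σ : ℝ → ℝ) (T : ℝ) (μ : YM T) : Prop :=
  calI f σ T μ ≠ ⊤ ∧
  ∃ r > 0, ∃ L > 0, ∃ ν : Measure ℝ, IsProbabilityMeasure ν ∧ ν (Icc (0:ℝ) 1)ᶜ = 0 ∧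
    (∀ p : ℝ × ℝ, p.1 ∈ Icc (0:ℝ) T → r ≤ μ.mom (fun l => l) p ∧ r ≤ μ.mom σ p) ∧
    ∀ p : ℝ × ℝ, p.1 ∈ Icc (0:ℝ) T → L < |p.2| → μ.m p = ν

/-- The class `𝓜₀` of Dirac masses of smooth functions in `𝓜_g`. -/
def M0 (f σ : ℝ → ℝ) (T : ℝ) (μ : YM T) : Prop :=
  Mg f σ T μ ∧ ∃ u : ℝ × ℝ → ℝ, ContDiff ℝ 1 u ∧ (∀ p, u p ∈ Icc (0:ℝ) 1) ∧
    ∀ p, μ.m p = Measure.dirac (u p)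

/-! ### The spaces `𝓓¹_a` and the Riesz representation of the cost -/

/-- `P` represents (the gradient of) an element of the Hilbert space `𝓓¹_a`. -/
def InD1 (T : ℝ) (a P : ℝ × ℝ → ℝ) : Prop :=
  Measurable P ∧ IntegrableOn (fun p => a p * P p ^ 2) (Icc (0:ℝ) T ×ˢ (univ : Set ℝ)) ∧
  ∀ δ > 0, ∃ φ : TTestC,
    (∫ p in Icc (0:ℝ) T ×ˢ (univ : Set ℝ), a p * (P p - pxF φ.toFun p) ^ 2) < δ

/-- The extended linear functional `ℓ^u_ε(φ)` with boundary terms. -/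
def ellC (f D : ℝ → ℝ) (T ε : ℝ) (u w : ℝ × ℝ → ℝ) (φ : TTestC) : ℝ :=
  (∫ x, u (T, x) * φ.toFun (T, x)) - (∫ x, u (0, x) * φ.toFun (0, x))
    - pair T u (ptF φ.toFun) - pair T (fun p => f (u p)) (pxF φ.toFun)
    + ε / 2 * pair T (fun p => D (u p) * w p) (pxF φ.toFun)

/-- `u` is a weak solution to `u_t + f(u)_x = (ε/2)(D(u)u_x)_x - (σ(u)Ψ_x)_x` with `Ψ_x = P`. -/
def rieszEq (f D σ : ℝ → ℝ) (T ε : ℝ) (u w P : ℝ × ℝ → ℝ) : Prop :=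
  ∀ φ : TTestC,
    (∫ x, u (T, x) * φ.toFun (T, x)) - (∫ x, u (0, x) * φ.toFun (0, x))
      - (pair T u (ptF φ.toFun)
        + pair T (fun p => f (u p) - ε / 2 * (D (u p) * w p) + σ (u p) * P p)
            (pxF φ.toFun)) = 0

/-- `μ(ι)_t + μ(f)_x = -(μ(σ) P)_x` weakly. -/
def calIEq (f σ : ℝ → ℝ) (T : ℝ) (μ : YM T) (P : ℝ × ℝ → ℝ) : Prop :=
  ∀ φ : TTest T,
    - pair T (μ.mom (fun l => l)) (ptF φ.toFun) - pair T (μ.mom f) (pxF φ.toFun)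
      = pair T (fun p => μ.mom σ p * P p) (pxF φ.toFun)

/-! ### The cost functional on `L¹_loc` -/

/-- Locally integrable on `[0,T] × ℝ`. -/
def L1loc (T : ℝ) (u : ℝ × ℝ → ℝ) : Prop :=
  Measurable u ∧ ∀ R > 0, IntegrableOn u (Icc (0:ℝ) T ×ˢ Icc (-R) R)

/-- The cost functional `Î_ε` on `L¹_loc([0,T] × ℝ)`. -/
def Ihat (f D σ : ℝ → ℝ) (T ε : ℝ) (u : ℝ × ℝ → ℝ) : ℝ≥0∞ :=
  if L2loc T (fun p => f (u p)) ∧ hasDx T u then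
    ⨆ φ : TTest T, ENNReal.ofReal (IexprW f D σ T ε u (wDx T u) φ)
  else ⊤

/-! ### Hamilton–Jacobi equations -/

/-- The space `𝓑` (representatives of equivalence classes modulo additive constants). -/
structure HJ (T : ℝ) where
  b : ℝ × ℝ → ℝ
  meas : Measurable b
  sq : ∀ t ∈ Icc (0:ℝ) T, ∀ R > 0, IntegrableOn (fun x => b (t, x) ^ 2) (Icc (-R) R)
  contL2 : ∀ t₀ ∈ Icc (0:ℝ) T, ∀ R > 0, ∀ δ > 0, ∃ ζ > 0, ∀ t ∈ Icc (0:ℝ) T,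
    |t - t₀| < ζ → (∫ x in Icc (-R) R, (b (t, x) - b (t₀, x)) ^ 2) < δ
  ux : cU T
  hux : ∀ φ : TTest T, pair T b (pxF φ.toFun) = - pair T ux.toFun φ.toFun

/-- The part of the distance on `𝓑` involving the infimum over additive constants. -/
def dConst (T : ℝ) (b1 b2 : HJ T) : ℝ :=
  sInf { r : ℝ | ∃ c : ℝ, r = sSup { s : ℝ | ∃ t ∈ Icc (0:ℝ) T,
    s = ∑' n : ℕ, (2 : ℝ)⁻¹ ^ (n + 1) *
      Real.sqrt (∫ x in Icc (-((n : ℝ) + 1)) ((n : ℝ) + 1),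
        (b1.b (t, x) - b2.b (t, x) + c) ^ 2) } }

/-- The metric `d_𝓑`. -/
def dB (T : ℝ) (b1 b2 : HJ T) : ℝ := dcU T b1.ux b2.ux + dConst T b1 b2

/-- The metric `d_𝒴`. -/
def dY (T : ℝ) (b1 b2 : HJ T) : ℝ := dX T b1.ux b2.ux + dConst T b1 b2

/-- The expression inside the supremum defining `J_ε`. -/
def JexprW (f D σ : ℝ → ℝ) (T ε : ℝ) (bb uxf w2 : ℝ × ℝ → ℝ) (φ : TTest T) : ℝ :=
  - pair T bb (ptF φ.toFun) + pair T (fun p => f (uxf p)) φ.toFun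
    - ε / 2 * pair T (fun p => D (uxf p) * w2 p) φ.toFun
    - 1 / 2 * pair T (fun p => σ (uxf p) * φ.toFun p) φ.toFun

/-- The cost functional `J_ε` on `𝓑`. -/
def Jeps (f D σ : ℝ → ℝ) (T ε : ℝ) (b : HJ T) : ℝ≥0∞ :=
  if hasDx T b.ux.toFun then
    ⨆ φ : TTest T, ENNReal.ofReal (JexprW f D σ T ε b.b b.ux.toFun (wDx T b.ux.toFun) φ)
  else ⊤

/-- The rescaled cost functional `K_ε := ε⁻¹ J_ε`. -/
def Keps (f D σ : ℝ → ℝ) (T ε : ℝ) (b : HJ T) : ℝ≥0∞ :=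
  ENNReal.ofReal ε⁻¹ * Jeps f D σ T ε b

/-- Weak solutions to `b_t + f(b_x) = 0`. -/
def HJWeakSol (f : ℝ → ℝ) (T : ℝ) (b : HJ T) : Prop :=
  ∀ φ : TTest T, - pair T b.b (ptF φ.toFun) + pair T (fun p => f (b.ux.toFun p)) φ.toFun = 0

/-- The compatibility condition `b_x = μ(ι)` defining `𝓐`. -/
def APred (T : ℝ) (bm : HJ T × YM T) : Prop :=
  ∀ᵐ p ∂(volume.restrict (Icc (0:ℝ) T ×ˢ (univ : Set ℝ))),
    bm.1.ux.toFun p = bm.2.mom (fun l => l) p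

/-- The metric `d_𝓐`. -/
def dA (T : ℝ) (dw : YM T → YM T → ℝ)
    (x y : { bm : HJ T × YM T // APred T bm }) : ℝ :=
  dB T x.1.1 y.1.1 + dM T dw x.1.2 y.1.2

/-- The lift `𝓙_ε` of `J_ε` to `𝓐`. -/
def calJeps (f D σ : ℝ → ℝ) (T ε : ℝ) (x : { bm : HJ T × YM T // APred T bm }) : ℝ≥0∞ :=
  if ∀ p, x.1.2.m p = Measure.dirac (x.1.1.ux.toFun p) then Jeps f D σ T ε x.1.1 else ⊤

/-- The limiting functional `𝓙` on `𝓐`. -/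
def calJ (f σ : ℝ → ℝ) (T : ℝ) (x : { bm : HJ T × YM T // APred T bm }) : ℝ≥0∞ :=
  ⨆ φ : TTest T, ENNReal.ofReal
    (- pair T x.1.1.b (ptF φ.toFun) + pair T (x.1.2.mom f) φ.toFun
      - 1 / 2 * pair T (fun p => x.1.2.mom σ p * φ.toFun p) φ.toFun)

/-! ### Jump sets and BV solutions -/

/-- The function `ρ(v, u⁺, u⁻)` of Remark 2.3. -/
def rhoJ (f : ℝ → ℝ) (v a b : ℝ) : ℝ :=
  if v ∈ Icc (min a b) (max a b) then
    f b * (a - v) + f a * (v - b) - f v * (a - b)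
  else 0

/-! ### Primitives and the metric `d_U` -/

/-- The primitive of `w` vanishing at `0`. -/
def prim (w : ℝ → ℝ) (x : ℝ) : ℝ := ∫ y in (0:ℝ)..x, w y

lemma integral_eq_interval {F : ℝ → ℝ} {R : ℝ} (hR : 0 ≤ R)
    (hF : ∀ x, x ∉ Ioo (-R) R → F x = 0) : ∫ x, F x = ∫ x in (-R)..R, F x := by
  rw [intervalIntegral.integral_of_le (by linarith), setIntegral_eq_integral_of_forall_compl_eq_zero]
  intro x hx
  exact hF x fun h => hx ⟨h.1, h.2.le⟩

lemma deriv_eq_zero_of_supp {φ : ℝ → ℝ} (h1 : ContDiff ℝ 1 φ) {R : ℝ}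
    (h : Function.support φ ⊆ Ioo (-R) R) (x : ℝ) (hx : x ∉ Ioo (-R) R) : deriv φ x = 0 := by
  by_contra hne
  -- `φ` vanishes on one side of `x`, so its one-sided derivative there is `0`
  have hx' : x ≤ -R ∨ R ≤ x := by
    by_contra hc
    push Not at hc
    exact hx ⟨hc.1, hc.2⟩
  have hz : ∀ y, y ∉ Ioo (-R) R → φ y = 0 := fun y hy => by
    by_contra h0
    exact hy (h h0)
  have hd : HasDerivAt φ (deriv φ x) x := (h1.differentiable one_ne_zero x).hasDerivAt
  rcases hx' with hx' | hx'
  · have h0 : HasDerivWithinAt φ 0 (Iic x) x :=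
      (hasDerivWithinAt_const x (Iic x) (0:ℝ)).congr
        (fun y hy => hz y fun hh => by have := hh.1; have := mem_Iic.1 hy; linarith) (hz x hx)
    exact hne ((uniqueDiffWithinAt_Iic x).eq_deriv _ hd.hasDerivWithinAt h0)
  · have h0 : HasDerivWithinAt φ 0 (Ici x) x :=
      (hasDerivWithinAt_const x (Ici x) (0:ℝ)).congr
        (fun y hy => hz y fun hh => by have := hh.2; have := mem_Ici.1 hy; linarith) (hz x hx)
    exact hne ((uniqueDiffWithinAt_Ici x).eq_deriv _ hd.hasDerivWithinAt h0)

/-- Integration by parts of an absolutely continuous function against a compactly supported one: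
there are no boundary terms. -/
lemma ibp_AC {V φ : ℝ → ℝ} {R : ℝ} (hR : 0 ≤ R) (hV : AbsolutelyContinuousOnInterval V (-R) R)
    (h1 : ContDiff ℝ 1 φ) (h : Function.support φ ⊆ Ioo (-R) R) :
    ∫ x, deriv V x * φ x = - ∫ x, V x * deriv φ x := by
  have hz : ∀ y, y ∉ Ioo (-R) R → φ y = 0 := fun y hy => by
    by_contra h0
    exact hy (h h0)
  rw [integral_eq_interval hR (fun x hx => by rw [hz x hx, mul_zero]),
    integral_eq_interval hR (fun x hx => by rw [deriv_eq_zero_of_supp h1 h x hx, mul_zero]),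
    hV.integral_mul_deriv_eq_deriv_mul h1.contDiffOn.absolutelyContinuousOnInterval,
    hz R (by simp), hz (-R) (by simp)]
  simp

lemma locInt_ii {f : ℝ → ℝ} (hf : LocallyIntegrable f) (a b : ℝ) :
    IntervalIntegrable f volume a b :=
  intervalIntegrable_iff.mpr <|
    (hf.integrableOn_isCompact isCompact_uIcc).mono_set uIoc_subset_uIcc

lemma AC_prim {w : ℝ → ℝ} (hw : LocallyIntegrable w) {R : ℝ} (hR : 0 ≤ R) :
    AbsolutelyContinuousOnInterval (prim w) (-R) R :=
  (locInt_ii hw (-R) R).absolutelyContinuousOnInterval_intervalIntegral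
    (by rw [uIcc_of_le (by linarith)]; constructor <;> linarith)

lemma ae_hasDerivAt_prim {w : ℝ → ℝ} (hw : LocallyIntegrable w) :
    ∀ᵐ x, HasDerivAt (prim w) (w x) x := by
  filter_upwards [_root_.LocallyIntegrable.ae_hasDerivAt_integral hw] with x hx
  exact hx 0

lemma ibp_prim {w φ : ℝ → ℝ} (hw : LocallyIntegrable w) {R : ℝ} (hR : 0 ≤ R)
    (h1 : ContDiff ℝ 1 φ) (h : Function.support φ ⊆ Ioo (-R) R) :
    ∫ x, w x * φ x = - ∫ x, prim w x * deriv φ x := by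
  rw [← ibp_AC hR (AC_prim hw hR) h1 h]
  apply integral_congr_ae
  filter_upwards [ae_hasDerivAt_prim hw] with x hx
  rw [hx.deriv]

lemma locInt_of_bdd {w : ℝ → ℝ} (hm : Measurable w) {C : ℝ} (hb : ∀ x, |w x| ≤ C) :
    LocallyIntegrable w :=
  (locallyIntegrable_const C).mono hm.aestronglyMeasurable
    (Eventually.of_forall fun x => by
      rw [Real.norm_eq_abs, Real.norm_eq_abs]; exact (hb x).trans (le_abs_self C))

lemma locInt01 {w : ℝ → ℝ} (hm : Measurable w) (hb : ∀ x, w x ∈ Icc (0:ℝ) 1) :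
    LocallyIntegrable w :=
  locInt_of_bdd hm (C := 1) fun x => by rw [abs_of_nonneg (hb x).1]; exact (hb x).2

lemma prim_sub {u v : ℝ → ℝ} (hu : LocallyIntegrable u) (hv : LocallyIntegrable v) (x : ℝ) :
    prim (fun y => u y - v y) x = prim u x - prim v x :=
  intervalIntegral.integral_sub (locInt_ii hu _ _) (locInt_ii hv _ _)

lemma prim_diff {u : ℝ → ℝ} (hu : LocallyIntegrable u) (x y : ℝ) :
    prim u y - prim u x = ∫ z in x..y, u z :=
  intervalIntegral.integral_interval_sub_left (locInt_ii hu _ _) (locInt_ii hu _ _)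

lemma prim_mono_lip {u : ℝ → ℝ} (hm : Measurable u) (hb : ∀ x, u x ∈ Icc (0:ℝ) 1) {x y : ℝ}
    (hxy : x ≤ y) : 0 ≤ prim u y - prim u x ∧ prim u y - prim u x ≤ y - x := by
  rw [prim_diff (locInt01 hm hb)]
  refine ⟨intervalIntegral.integral_nonneg hxy fun z _ => (hb z).1, ?_⟩
  calc ∫ z in x..y, u z ≤ ∫ z in x..y, (1:ℝ) :=
        intervalIntegral.integral_mono_on hxy (locInt_ii (locInt01 hm hb) _ _)
          (by simp) fun z _ => (hb z).2
    _ = y - x := by simp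

/-- If the primitives of `u` and `v` are `κ`-close on `[-N, N]`, then the pairing of `u - v` with a
normalized test function is at most `κ (N + 1/2)`; here `|φ'| ≤ (1 + φ'²)/2` is used in place of the
Cauchy–Schwarz inequality. -/
lemma pairing_le {u v : ℝ → ℝ} (hu : Measurable u) (hu' : ∀ x, u x ∈ Icc (0:ℝ) 1)
    (hv : Measurable v) (hv' : ∀ x, v x ∈ Icc (0:ℝ) 1) {N κ : ℝ} (hN : 0 ≤ N) (hκ : 0 ≤ κ)
    (h : ∀ x ∈ Icc (-N) N, |prim u x - prim v x| ≤ κ) (φ : STest N)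
    (hφ : ∫ x, deriv φ.toFun x ^ 2 = 1) :
    |∫ x, (u x - v x) * φ.toFun x| ≤ κ * (N + 1) := by
  have h1 : ContDiff ℝ 1 φ.toFun := φ.smooth.of_le (by exact_mod_cast le_top)
  have lu := locInt01 hu hu'
  have lv := locInt01 hv hv'
  rw [ibp_prim (w := fun x => u x - v x) (lu.sub lv) hN h1 φ.supp, abs_neg,
    integral_eq_interval hN (fun x hx => by
      rw [deriv_eq_zero_of_supp h1 φ.supp x hx, mul_zero])]
  have hd : Continuous (deriv φ.toFun) := h1.continuous_deriv le_rfl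
  have hsq : ∫ x in (-N)..N, deriv φ.toFun x ^ 2 = 1 := by
    rw [← hφ, integral_eq_interval hN (fun x hx => by
      rw [deriv_eq_zero_of_supp h1 φ.supp x hx]; norm_num)]
  have hb : ‖∫ x in (-N)..N, prim (fun y => u y - v y) x * deriv φ.toFun x‖ ≤
      ∫ x in (-N)..N, κ * ((1 + deriv φ.toFun x ^ 2) / 2) := by
    apply intervalIntegral.norm_integral_le_of_norm_le (by linarith)
    · refine Eventually.of_forall fun x hx => ?_
      have hx' : x ∈ Icc (-N) N := ⟨hx.1.le, hx.2⟩
      rw [norm_mul, Real.norm_eq_abs, Real.norm_eq_abs]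
      refine mul_le_mul ?_ ?_ (abs_nonneg _) hκ
      · have := prim_sub lu lv x
        have h2 := h x hx'
        rw [← this] at h2
        exact h2
      · rw [← sq_abs]
        nlinarith [sq_nonneg (|deriv φ.toFun x| - 1)]
    · exact Continuous.intervalIntegrable (by fun_prop) _ _
  rw [Real.norm_eq_abs] at hb
  refine hb.trans ?_
  have hii : IntervalIntegrable (fun x => deriv φ.toFun x ^ 2) volume (-N) N :=
    Continuous.intervalIntegrable (by fun_prop) _ _
  rw [intervalIntegral.integral_const_mul, intervalIntegral.integral_div,
    intervalIntegral.integral_add (by simp) hii, hsq]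
  simp only [intervalIntegral.integral_const, smul_eq_mul, mul_one]
  apply mul_le_mul_of_nonneg_left _ hκ
  linarith

lemma negNorm_le {u v : ℝ → ℝ} (hu : Measurable u) (hu' : ∀ x, u x ∈ Icc (0:ℝ) 1)
    (hv : Measurable v) (hv' : ∀ x, v x ∈ Icc (0:ℝ) 1) {N κ : ℝ} (hN : 0 ≤ N) (hκ : 0 ≤ κ)
    (h : ∀ x ∈ Icc (-N) N, |prim u x - prim v x| ≤ κ) :
    negNorm N (fun x => u x - v x) ≤ κ * (N + 1) := by
  apply Real.sSup_le _ (by positivity)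
  rintro r ⟨φ, hφ, rfl⟩
  exact (le_abs_self _).trans (pairing_le hu hu' hv hv' hN hκ h φ hφ)

/-- The opposite of a test function. -/
def STest.neg {N : ℝ} (φ : STest N) : STest N where
  toFun := fun x => -φ.toFun x
  smooth := φ.smooth.neg
  cpt := φ.cpt.neg
  supp := fun x hx => φ.supp fun h => hx (by simp [h])

lemma negNorm_nonneg (N : ℝ) (w : ℝ → ℝ) : 0 ≤ negNorm N w := by
  unfold negNorm
  rcases Set.eq_empty_or_nonempty { r : ℝ | ∃ φ : STest N, (∫ x, deriv φ.toFun x ^ 2) = 1 ∧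
    r = ∫ x, w x * φ.toFun x } with h | ⟨r, φ, hφ, hr⟩
  · rw [h, Real.sSup_empty]
  · apply Real.sSup_nonneg'
    rcases le_total 0 r with h0 | h0
    · exact ⟨r, ⟨φ, hφ, hr⟩, h0⟩
    · refine ⟨-r, ⟨φ.neg, ?_, ?_⟩, by linarith⟩
      · simpa [STest.neg, deriv.fun_neg] using hφ
      · simp [STest.neg, hr, integral_neg]

lemma prim_close {u v : ℝ → ℝ} (hu : Measurable u) (hu' : ∀ x, u x ∈ Icc (0:ℝ) 1)
    (hv : Measurable v) (hv' : ∀ x, v x ∈ Icc (0:ℝ) 1) {N : ℝ} (x : ℝ) (hx : x ∈ Icc (-N) N) :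
    |prim u x - prim v x| ≤ N := by
  have z (g : ℝ → ℝ) : prim g 0 = 0 := by simp [prim]
  have := hx.1
  have := hx.2
  rcases le_total 0 x with h | h
  · have h1 := prim_mono_lip hu hu' h
    have h2 := prim_mono_lip hv hv' h
    rw [z] at h1 h2
    rw [abs_le]; constructor <;> linarith
  · have h1 := prim_mono_lip hu hu' h
    have h2 := prim_mono_lip hv hv' h
    rw [z] at h1 h2
    rw [abs_le]; constructor <;> linarith

lemma term_nonneg (u v : ℝ → ℝ) (n : ℕ) : 0 ≤ (2 : ℝ)⁻¹ ^ (n + 1) *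
    (negNorm ((n : ℝ) + 1) (fun x => u x - v x) /
      (1 + negNorm ((n : ℝ) + 1) (fun x => u x - v x))) := by
  have := negNorm_nonneg ((n : ℝ) + 1) (fun x => u x - v x)
  positivity

lemma term_le (u v : ℝ → ℝ) (n : ℕ) : (2 : ℝ)⁻¹ ^ (n + 1) *
    (negNorm ((n : ℝ) + 1) (fun x => u x - v x) /
      (1 + negNorm ((n : ℝ) + 1) (fun x => u x - v x))) ≤ (2 : ℝ)⁻¹ ^ (n + 1) := by
  have := negNorm_nonneg ((n : ℝ) + 1) (fun x => u x - v x)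
  apply mul_le_of_le_one_right (by positivity)
  rw [div_le_one (by positivity)]
  linarith

lemma summable_geo : Summable fun n : ℕ => (2 : ℝ)⁻¹ ^ (n + 1) :=
  (summable_nat_add_iff 1).2 (summable_geometric_of_lt_one (by norm_num) (by norm_num))

lemma summable_term (u v : ℝ → ℝ) : Summable fun n : ℕ => (2 : ℝ)⁻¹ ^ (n + 1) *
    (negNorm ((n : ℝ) + 1) (fun x => u x - v x) /
      (1 + negNorm ((n : ℝ) + 1) (fun x => u x - v x))) :=
  Summable.of_nonneg_of_le (term_nonneg u v) (term_le u v) summable_geo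

lemma dU_nonneg (u v : ℝ → ℝ) : 0 ≤ dU u v := tsum_nonneg (term_nonneg u v)

/-- Closeness of primitives on a large interval forces closeness in `d_U`. -/
lemma dU_le_of_prim {η : ℝ} (hη : 0 < η) : ∃ N > (0:ℝ), ∃ κ > (0:ℝ), ∀ u v : ℝ → ℝ,
    Measurable u → (∀ x, u x ∈ Icc (0:ℝ) 1) → Measurable v → (∀ x, v x ∈ Icc (0:ℝ) 1) →
    (∀ x ∈ Icc (-N) N, |prim u x - prim v x| ≤ κ) → dU u v ≤ η := by
  obtain ⟨N, hN⟩ := ((tendsto_sum_nat_add fun n : ℕ => (2 : ℝ)⁻¹ ^ (n + 1)).eventually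
    (gt_mem_nhds (half_pos hη))).exists
  set S := ∑ n ∈ Finset.range N, (2 : ℝ)⁻¹ ^ (n + 1) * ((n : ℝ) + 2) with hS
  have hS0 : 0 ≤ S := Finset.sum_nonneg fun n _ => by positivity
  refine ⟨(N : ℝ) + 1, by positivity, η / 2 / (S + 1), by positivity, ?_⟩
  intro u v hu hu' hv hv' h
  set κ := η / 2 / (S + 1) with hκ
  have hκ0 : 0 < κ := by positivity
  unfold dU
  rw [← (summable_term u v).sum_add_tsum_nat_add N]
  have hhead : ∑ n ∈ Finset.range N, (2 : ℝ)⁻¹ ^ (n + 1) *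
    (negNorm ((n : ℝ) + 1) (fun x => u x - v x) /
      (1 + negNorm ((n : ℝ) + 1) (fun x => u x - v x))) ≤ κ * S := by
    rw [hS, Finset.mul_sum]
    apply Finset.sum_le_sum
    intro n hn
    have hn' : (n : ℝ) + 1 ≤ N := by exact_mod_cast Finset.mem_range.1 hn
    have h0 := negNorm_nonneg ((n : ℝ) + 1) (fun x => u x - v x)
    have h1 : negNorm ((n : ℝ) + 1) (fun x => u x - v x) ≤ κ * ((n : ℝ) + 1 + 1) :=
      negNorm_le hu hu' hv hv' (by positivity) hκ0.le fun x hx => h x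
        ⟨by linarith [hx.1], by linarith [hx.2]⟩
    have h2 : negNorm ((n : ℝ) + 1) (fun x => u x - v x) /
      (1 + negNorm ((n : ℝ) + 1) (fun x => u x - v x)) ≤ κ * ((n : ℝ) + 2) := by
      refine (div_le_self h0 (by linarith)).trans (h1.trans_eq (by ring))
    calc _ ≤ (2 : ℝ)⁻¹ ^ (n + 1) * (κ * ((n : ℝ) + 2)) := by gcongr
      _ = _ := by ring
  have htail := Summable.tsum_le_tsum (fun n => term_le u v (n + N))
    ((summable_nat_add_iff N).2 (summable_term u v)) ((summable_nat_add_iff N).2 summable_geo)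
  have hκS : κ * S ≤ η / 2 := by
    rw [hκ, div_mul_eq_mul_div, div_le_iff₀ (by positivity)]
    nlinarith
  linarith

/-- Small `d_U` distance forces the pairing with a fixed test function to be small. -/
lemma pairing_lt_of_dU {ψ : ℝ → ℝ} (hψ : ContDiff ℝ (⊤ : ℕ∞) ψ) (hc : HasCompactSupport ψ)
    {η : ℝ} (hη : 0 < η) : ∃ δ > (0:ℝ), ∀ u v : ℝ → ℝ,
    Measurable u → (∀ x, u x ∈ Icc (0:ℝ) 1) → Measurable v → (∀ x, v x ∈ Icc (0:ℝ) 1) →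
    dU u v < δ → |∫ x, (u x - v x) * ψ x| < η := by
  have h1 : ContDiff ℝ 1 ψ := hψ.of_le (by exact_mod_cast le_top)
  obtain ⟨n, hn⟩ : ∃ n : ℕ, Function.support ψ ⊆ Ioo (-((n:ℝ) + 1)) ((n:ℝ) + 1) := by
    obtain ⟨r, hr⟩ := hc.isCompact.isBounded.subset_ball 0
    obtain ⟨n, hn⟩ := exists_nat_ge r
    refine ⟨n, fun x hx => ?_⟩
    have := hr (subset_tsupport _ hx)
    rw [Metric.mem_ball, Real.dist_eq, sub_zero, abs_lt] at this
    constructor <;> linarith [this.1, this.2]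
  set A := ∫ x, deriv ψ x ^ 2 with hA
  have hA0 : 0 ≤ A := integral_nonneg fun x => sq_nonneg _
  set s := Real.sqrt A with hs
  set β := η / (s + 1) with hβ
  have hs0 : 0 ≤ s := Real.sqrt_nonneg _
  have hβ0 : 0 < β := by positivity
  refine ⟨(2 : ℝ)⁻¹ ^ (n + 1) * (β / (1 + β)), by positivity, ?_⟩
  intro u v hu hu' hv hv' h
  set a := negNorm ((n : ℝ) + 1) (fun x => u x - v x) with ha
  have ha0 : 0 ≤ a := negNorm_nonneg _ _
  have hlt : a < β := by
    have h2 : (2 : ℝ)⁻¹ ^ (n + 1) * (a / (1 + a)) ≤ dU u v :=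
      (summable_term u v).le_tsum n fun m _ => term_nonneg u v m
    have h3 := lt_of_mul_lt_mul_left (h2.trans_lt h) (by positivity)
    rw [div_lt_div_iff₀ (by positivity) (by positivity)] at h3
    linarith
  rcases eq_or_lt_of_le hA0 with h0 | h0
  · have hd : Continuous (deriv ψ) := h1.continuous_deriv le_rfl
    have hdc : HasCompactSupport (fun x => deriv ψ x ^ 2) := by
      exact hc.deriv.comp_left (g := fun y : ℝ => y ^ 2) (by norm_num)
    have hz : (fun x => deriv ψ x ^ 2) = 0 := by
      refine (Continuous.ae_eq_iff_eq volume (hd.pow 2) continuous_zero).1 ?_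
      exact (integral_eq_zero_iff_of_nonneg (fun x => sq_nonneg (deriv ψ x))
        ((hd.pow 2).integrable_of_hasCompactSupport hdc)).1 h0.symm
    have hd0 : deriv ψ = 0 := by
      funext x
      have := congrFun hz x
      simpa using this
    have := ibp_prim (w := fun x => u x - v x) ((locInt01 hu hu').sub (locInt01 hv hv')) (R := (n:ℝ) + 1) (by positivity) h1 hn
    have h4 : ∫ x, (u x - v x) * ψ x = 0 := by
      rw [hd0] at this
      simpa using this
    rw [h4, abs_zero]
    exact hη
  · have hspos : 0 < s := Real.sqrt_pos.2 h0
    let φ : STest ((n:ℝ) + 1) :=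
      { toFun := fun x => s⁻¹ * ψ x
        smooth := contDiff_const.mul hψ
        cpt := hc.mul_left
        supp := fun x hx => hn fun h => hx (by simp [h]) }
    have hφ : ∫ x, deriv φ.toFun x ^ 2 = 1 := by
      have : ∀ x, deriv φ.toFun x = s⁻¹ * deriv ψ x := fun x =>
        deriv_const_mul _ (h1.differentiable one_ne_zero x)
      simp only [this, mul_pow]
      rw [integral_const_mul, ← hA, inv_pow, hs, Real.sq_sqrt hA0, inv_mul_cancel₀ h0.ne']
    have hb : BddAbove { r : ℝ | ∃ φ : STest ((n:ℝ) + 1), (∫ x, deriv φ.toFun x ^ 2) = 1 ∧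
        r = ∫ x, (u x - v x) * φ.toFun x } := by
      refine ⟨((n:ℝ) + 1) * ((n:ℝ) + 1 + 1), ?_⟩
      rintro r ⟨φ, hφ, rfl⟩
      exact (le_abs_self _).trans (pairing_le hu hu' hv hv' (by positivity) (by positivity)
        (fun x hx => prim_close hu hu' hv hv' x hx) φ hφ)
    have hle : ∀ φ : STest ((n:ℝ) + 1), (∫ x, deriv φ.toFun x ^ 2) = 1 →
        ∫ x, (u x - v x) * φ.toFun x ≤ a := fun φ hφ => le_csSup hb ⟨φ, hφ, rfl⟩
    have e1 := hle φ hφ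
    have e2 := hle φ.neg (by simpa [STest.neg, deriv.fun_neg] using hφ)
    have e3 : ∫ x, (u x - v x) * φ.toFun x = s⁻¹ * ∫ x, (u x - v x) * ψ x := by
      rw [← integral_const_mul]
      congr 1; funext x; simp only [φ]; ring
    have e4 : ∫ x, (u x - v x) * φ.neg.toFun x = -(s⁻¹ * ∫ x, (u x - v x) * ψ x) := by
      rw [← e3, ← integral_neg]
      congr 1; funext x; simp only [STest.neg]; ring
    rw [e3] at e1
    rw [e4] at e2
    set J := ∫ x, (u x - v x) * ψ x
    have e5 : |J| ≤ s * a := by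
      have : |s⁻¹ * J| ≤ a := abs_le.2 ⟨by linarith, e1⟩
      rw [abs_mul, abs_of_pos (inv_pos.2 hspos), inv_mul_le_iff₀ hspos] at this
      exact this
    calc |J| ≤ s * a := e5
      _ < (s + 1) * β := by nlinarith
      _ = η := by rw [hβ]; field_simp

/-! ### The chain rule for the diffusive term -/

/-- A standard sequence of bumps shrinking to the origin. -/
def bmp (n : ℕ) : ContDiffBump (0:ℝ) where
  rIn := 1 / ((n:ℝ) + 1)
  rOut := 2 / ((n:ℝ) + 1)
  rIn_pos := by positivity
  rIn_lt_rOut := by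
    rw [div_lt_div_iff_of_pos_right (by positivity)]
    norm_num

/-- The mollifier `x ↦ ρ_n (q - x)`. -/
def mol (n : ℕ) (q : ℝ) : ℝ → ℝ := fun x => (bmp n).normed volume (q - x)

lemma mol_smooth (n : ℕ) (q : ℝ) : ContDiff ℝ (⊤ : ℕ∞) (mol n q) :=
  (bmp n).contDiff_normed.comp (contDiff_const.sub contDiff_id)

lemma mol_cpt (n : ℕ) (q : ℝ) : HasCompactSupport (mol n q) :=
  (bmp n).hasCompactSupport_normed.comp_homeomorph (Homeomorph.subLeft q)

lemma deriv_mol (n : ℕ) (q x : ℝ) :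
    deriv (mol n q) x = - deriv ((bmp n).normed volume) (q - x) := by
  unfold mol
  rw [deriv_comp_const_sub]

lemma exists_supp {ψ : ℝ → ℝ} (hc : HasCompactSupport ψ) :
    ∃ R > (0:ℝ), Function.support ψ ⊆ Ioo (-R) R := by
  obtain ⟨r, hr⟩ := hc.isCompact.isBounded.subset_ball 0
  refine ⟨|r| + 1, by positivity, fun x hx => ?_⟩
  have := hr (subset_tsupport _ hx)
  rw [Metric.mem_ball, Real.dist_eq, sub_zero, abs_lt] at this
  constructor <;> linarith [this.1, this.2, le_abs_self r]

/-- A locally integrable function whose mollified derivatives vanish is constant almost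
everywhere. -/
lemma ae_const_of_mol {g : ℝ → ℝ} (hg : LocallyIntegrable g)
    (h : ∀ (n : ℕ) (q : ℚ), ∫ x, g x * deriv (mol n q) x = 0) :
    ∃ c : ℝ, ∀ᵐ x, g x = c := by
  have hk : ∀ n : ℕ, ∃ k : ℝ, ∀ x,
      MeasureTheory.convolution ((bmp n).normed volume) g (ContinuousLinearMap.lsmul ℝ ℝ) volume x
        = k := by
    intro n
    have hs : ContDiff ℝ 1 ((bmp n).normed (volume : Measure ℝ)) := (bmp n).contDiff_normed
    have hcs : HasCompactSupport ((bmp n).normed (volume : Measure ℝ)) :=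
      (bmp n).hasCompactSupport_normed
    have hder := fun x => HasCompactSupport.hasDerivAt_convolution_left
      (ContinuousLinearMap.lsmul ℝ ℝ) hcs hs hg x
    have hcont : Continuous (MeasureTheory.convolution (deriv ((bmp n).normed volume)) g
        (ContinuousLinearMap.lsmul ℝ ℝ) volume) :=
      HasCompactSupport.continuous_convolution_left _ hcs.deriv
        (hs.continuous_deriv le_rfl) hg
    have hzero : MeasureTheory.convolution (deriv ((bmp n).normed volume)) g
        (ContinuousLinearMap.lsmul ℝ ℝ) volume = 0 := by
      refine Continuous.ext_on Rat.denseRange_cast hcont continuous_zero ?_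
      rintro _ ⟨q, rfl⟩
      rw [MeasureTheory.convolution_eq_swap]
      have := h n q
      simp only [deriv_mol] at this
      simp only [ContinuousLinearMap.lsmul_apply, smul_eq_mul, Pi.zero_apply]
      rw [← neg_eq_zero, ← integral_neg]
      refine Eq.trans ?_ this
      congr 1; funext x; ring
    refine ⟨_, fun x => is_const_of_deriv_eq_zero (fun y => (hder y).differentiableAt)
      (fun y => ?_) x 0⟩
    rw [(hder y).deriv, hzero]; rfl
  choose k hk using hk
  have hlim : ∀ᵐ x, Tendsto k atTop (𝓝 (g x)) := by
    have := ContDiffBump.ae_convolution_tendsto_right_of_locallyIntegrable (μ := volume)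
      (φ := bmp) (l := atTop) (K := 2) (g := g) ?_ ?_ hg
    · filter_upwards [this] with x hx
      simpa only [hk] using hx
    · have := (tendsto_const_div_atTop_nhds_zero_nat (2:ℝ)).comp (tendsto_add_atTop_nat 1)
      refine this.congr fun n => ?_
      simp [bmp]
    · refine Eventually.of_forall fun n => ?_
      simp only [bmp]
      apply le_of_eq; ring
  obtain ⟨x0, hx0⟩ := hlim.exists
  exact ⟨g x0, by filter_upwards [hlim] with x hx using tendsto_nhds_unique hx hx0⟩

/-- A function with a locally integrable weak derivative `w` is a primitive of `w`. -/
lemma ae_eq_prim_of_weak {u w : ℝ → ℝ} (hu : LocallyIntegrable u) (hw : LocallyIntegrable w)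
    (h : ∀ (n : ℕ) (q : ℚ), ∫ x, u x * deriv (mol n q) x = - ∫ x, w x * mol n q x) :
    ∃ c : ℝ, ∀ᵐ x, u x = prim w x + c := by
  have hp : Continuous (prim w) := intervalIntegral.continuous_primitive (locInt_ii hw) 0
  have hpl : LocallyIntegrable (prim w) := hp.locallyIntegrable
  have hz : ∀ (n : ℕ) (q : ℚ), ∫ x, (u x - prim w x) * deriv (mol n q) x = 0 := by
    intro n q
    have h1 : ContDiff ℝ 1 (mol n q) := (mol_smooth n q).of_le (by exact_mod_cast le_top)
    obtain ⟨R, hR, hs⟩ := exists_supp (mol_cpt n q)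
    have e := ibp_prim hw hR.le h1 hs
    have hi (v : ℝ → ℝ) (hv : LocallyIntegrable v) :
        Integrable (fun x => v x * deriv (mol n q) x) := by
      have := hv.integrable_smul_right_of_hasCompactSupport (h1.continuous_deriv le_rfl)
        (mol_cpt n q).deriv
      simpa using this
    simp only [sub_mul]
    rw [integral_sub (hi u hu) (hi _ hpl), h n q, e]
    ring
  obtain ⟨c, hc⟩ := ae_const_of_mol (g := fun x => u x - prim w x) (hu.sub hpl) hz
  exact ⟨c, by filter_upwards [hc] with x hx; linarith⟩

lemma AC_comp_lip {V d : ℝ → ℝ} {K : NNReal} {a b : ℝ} (hd : LipschitzWith K d)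
    (hV : AbsolutelyContinuousOnInterval V a b) :
    AbsolutelyContinuousOnInterval (fun x => d (V x)) a b := by
  rw [absolutelyContinuousOnInterval_iff] at hV ⊢
  intro ε hε
  obtain ⟨δ, hδ, h⟩ := hV (ε / (K + 1)) (by positivity)
  refine ⟨δ, hδ, fun E hE hl => ?_⟩
  have h1 := h E hE hl
  calc ∑ i ∈ Finset.range E.1, dist (d (V (E.2 i).1)) (d (V (E.2 i).2))
      ≤ ∑ i ∈ Finset.range E.1, K * dist (V (E.2 i).1) (V (E.2 i).2) :=
        Finset.sum_le_sum fun i _ => hd.dist_le_mul _ _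
    _ = K * ∑ i ∈ Finset.range E.1, dist (V (E.2 i).1) (V (E.2 i).2) := by rw [Finset.mul_sum]
    _ ≤ (K + 1) * ∑ i ∈ Finset.range E.1, dist (V (E.2 i).1) (V (E.2 i).2) := by
        gcongr
        linarith
    _ < (K + 1) * (ε / (K + 1)) := by gcongr
    _ = ε := by field_simp

/-- One-dimensional chain rule in weak form: `∫ d'(u) u' φ = - ∫ d(u) φ'`. -/
lemma chain_one {u w d Dx φ : ℝ → ℝ} {c : ℝ} {K : NNReal} (hw : LocallyIntegrable w)
    (hu : ∀ᵐ x, u x = prim w x + c) (hd : LipschitzWith K d) (hD : ∀ s, HasDerivAt d (Dx s) s)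
    (h1 : ContDiff ℝ 1 φ) (hc : HasCompactSupport φ) :
    ∫ x, Dx (u x) * w x * φ x = - ∫ x, d (u x) * deriv φ x := by
  obtain ⟨R, hR, hs⟩ := exists_supp hc
  have hV : AbsolutelyContinuousOnInterval (fun x => prim w x + c) (-R) R := by
    have h0 : AbsolutelyContinuousOnInterval (fun _ : ℝ => c) (-R) R :=
      contDiff_const.contDiffOn.absolutelyContinuousOnInterval
    exact (AC_prim hw hR.le).add h0
  have e := ibp_AC hR.le (AC_comp_lip hd hV) h1 hs
  have e1 : ∫ x, Dx (u x) * w x * φ x =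
      ∫ x, deriv (fun x => d (prim w x + c)) x * φ x := by
    apply integral_congr_ae
    filter_upwards [hu, ae_hasDerivAt_prim hw] with x hx hx'
    have := (hD (prim w x + c)).comp x (hx'.add_const c)
    have h2 : deriv (fun x => d (prim w x + c)) x = Dx (prim w x + c) * w x := this.deriv
    rw [h2, hx]
  have e2 : ∫ x, d (u x) * deriv φ x = ∫ x, d (prim w x + c) * deriv φ x := by
    apply integral_congr_ae
    filter_upwards [hu] with x hx
    rw [hx]
  rw [e1, e2, e]

/-! ### Time slices and the diffusive term -/

/-- The tensor product test function `χ(t) ψ(x)`. -/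
def prodTest {T : ℝ} {χ ψ : ℝ → ℝ} (hχ : ContDiff ℝ (⊤ : ℕ∞) χ) (hχc : HasCompactSupport χ)
    (hχs : Function.support χ ⊆ Ioo 0 T) (hψ : ContDiff ℝ (⊤ : ℕ∞) ψ)
    (hψc : HasCompactSupport ψ) : TTest T where
  toFun := fun p => χ p.1 * ψ p.2
  smooth := (hχ.comp contDiff_fst).mul (hψ.comp contDiff_snd)
  cpt := by
    refine HasCompactSupport.intro (K := tsupport χ ×ˢ tsupport ψ)
      (hχc.isCompact.prod hψc.isCompact) fun p hp => ?_
    by_contra h0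
    exact hp ⟨subset_tsupport _ (left_ne_zero_of_mul h0),
      subset_tsupport _ (right_ne_zero_of_mul h0)⟩
  supp := fun p hp => ⟨hχs (left_ne_zero_of_mul hp), mem_univ _⟩

lemma fderiv_prod_apply {χ ψ : ℝ → ℝ} (hχ : Differentiable ℝ χ) (hψ : Differentiable ℝ ψ)
    (p v : ℝ × ℝ) : fderiv ℝ (fun p : ℝ × ℝ => χ p.1 * ψ p.2) p v =
      χ p.1 * (deriv ψ p.2 * v.2) + ψ p.2 * (deriv χ p.1 * v.1) := by
  have h1 : HasFDerivAt (fun p : ℝ × ℝ => χ p.1)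
      (deriv χ p.1 • ContinuousLinearMap.fst ℝ ℝ ℝ) p :=
    ((hχ p.1).hasDerivAt).comp_hasFDerivAt p hasFDerivAt_fst
  have h2 : HasFDerivAt (fun p : ℝ × ℝ => ψ p.2)
      (deriv ψ p.2 • ContinuousLinearMap.snd ℝ ℝ ℝ) p :=
    ((hψ p.2).hasDerivAt).comp_hasFDerivAt p hasFDerivAt_snd
  have h3 := (h1.mul h2).fderiv
  simp only [Pi.mul_def] at h3
  rw [h3]
  simp

lemma smooth_diff {χ : ℝ → ℝ} (hχ : ContDiff ℝ (⊤ : ℕ∞) χ) : Differentiable ℝ χ :=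
  hχ.differentiable (by simp)

lemma pxF_prod {χ ψ : ℝ → ℝ} (hχ : ContDiff ℝ (⊤ : ℕ∞) χ) (hψ : ContDiff ℝ (⊤ : ℕ∞) ψ) :
    pxF (fun p : ℝ × ℝ => χ p.1 * ψ p.2) = fun p => χ p.1 * deriv ψ p.2 := by
  funext p
  simp [pxF, fderiv_prod_apply (smooth_diff hχ) (smooth_diff hψ)]

lemma ptF_prod {χ ψ : ℝ → ℝ} (hχ : ContDiff ℝ (⊤ : ℕ∞) χ) (hψ : ContDiff ℝ (⊤ : ℕ∞) ψ) :
    ptF (fun p : ℝ × ℝ => χ p.1 * ψ p.2) = fun p => deriv χ p.1 * ψ p.2 := by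
  funext p
  simp [ptF, fderiv_prod_apply (smooth_diff hχ) (smooth_diff hψ), mul_comm]

lemma smooth_deriv {χ : ℝ → ℝ} (hχ : ContDiff ℝ (⊤ : ℕ∞) χ) :
    ContDiff ℝ (⊤ : ℕ∞) (deriv χ) :=
  (contDiff_infty_iff_deriv.1 hχ).2

lemma restrict_strip (T : ℝ) :
    (volume : Measure (ℝ × ℝ)).restrict (Icc 0 T ×ˢ (univ : Set ℝ)) =
      ((volume : Measure ℝ).restrict (Icc 0 T)).prod volume := by
  rw [Measure.volume_eq_prod, ← Measure.prod_restrict, Measure.restrict_univ]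

/-- A locally integrable function is integrable on the strip against `χ(t) ψ(x)` with `χ`, `ψ`
continuous and `ψ` compactly supported. -/
lemma integrable_strip {T : ℝ} {g : ℝ × ℝ → ℝ} (hg : L1loc T g) {χ ψ : ℝ → ℝ}
    (hχ : Continuous χ) (hψ : Continuous ψ) (hψc : HasCompactSupport ψ) :
    Integrable (fun p : ℝ × ℝ => g p * (χ p.1 * ψ p.2))
      (((volume : Measure ℝ).restrict (Icc 0 T)).prod volume) := by
  rw [← restrict_strip]
  obtain ⟨R, hR, hs⟩ := exists_supp hψc
  have hk : ContinuousOn (fun p : ℝ × ℝ => χ p.1 * ψ p.2) (Icc 0 T ×ˢ Icc (-R) R) :=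
    Continuous.continuousOn (by fun_prop)
  have h1 := (hg.2 R hR).mul_continuousOn hk (isCompact_Icc.prod isCompact_Icc)
  refine IntegrableOn.of_forall_sdiff_eq_zero h1
    (measurableSet_Icc.prod MeasurableSet.univ) fun p hp => ?_
  have : ψ p.2 = 0 := by
    by_contra h0
    exact hp.2 ⟨hp.1.1, Ioo_subset_Icc_self (hs h0)⟩
  rw [this, mul_zero, mul_zero]

lemma pair_prod {T : ℝ} {g : ℝ × ℝ → ℝ} (hg : L1loc T g) {χ ψ : ℝ → ℝ}
    (hχ : Continuous χ) (hψ : Continuous ψ) (hψc : HasCompactSupport ψ) :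
    pair T g (fun p => χ p.1 * ψ p.2) =
      ∫ t in Icc 0 T, χ t * ∫ x, g (t, x) * ψ x := by
  unfold pair
  rw [restrict_strip, integral_prod _ (integrable_strip hg hχ hψ hψc)]
  congr 1; funext t
  rw [← integral_const_mul]
  congr 1; funext x; ring

lemma integrable_slice {T : ℝ} {g : ℝ × ℝ → ℝ} (hg : L1loc T g) {ψ : ℝ → ℝ}
    (hψ : Continuous ψ) (hψc : HasCompactSupport ψ) :
    IntegrableOn (fun t => ∫ x, g (t, x) * ψ x) (Icc 0 T) := by
  have := (integrable_strip hg (continuous_const (y := (1:ℝ))) hψ hψc).integral_prod_left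
  simpa [IntegrableOn] using this

lemma L1loc_of_bdd {T : ℝ} {g : ℝ × ℝ → ℝ} (hg : Measurable g) {C : ℝ} (hb : ∀ p, |g p| ≤ C) :
    L1loc T g := by
  refine ⟨hg, fun R _ => ?_⟩
  refine Measure.integrableOn_of_bounded (M := C) ?_ hg.aestronglyMeasurable
    (Eventually.of_forall hb)
  exact (isCompact_Icc.prod isCompact_Icc).measure_lt_top.ne

lemma L1loc_of_L2loc {T : ℝ} {w : ℝ × ℝ → ℝ} (hw : L2loc T w) : L1loc T w := by
  refine ⟨hw.1, fun R hR => ?_⟩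
  have h1 : IntegrableOn (fun _ : ℝ × ℝ => (1:ℝ)) (Icc 0 T ×ˢ Icc (-R) R) :=
    integrableOn_const (isCompact_Icc.prod isCompact_Icc).measure_lt_top.ne
  refine (h1.add (hw.2 R hR)).mono' hw.1.aestronglyMeasurable (Eventually.of_forall fun p => ?_)
  simp only [Pi.add_apply, Real.norm_eq_abs]
  rw [← sq_abs]
  nlinarith [sq_nonneg (|w p| - 1), sq_nonneg (|w p|)]

lemma L1loc_mul {T : ℝ} {g w : ℝ × ℝ → ℝ} (hg : Measurable g) {C : ℝ} (hb : ∀ p, |g p| ≤ C)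
    (hw : L1loc T w) : L1loc T (fun p => g p * w p) :=
  ⟨hg.mul hw.1, fun R hR => (hw.2 R hR).bdd_mul hg.aestronglyMeasurable
    (Eventually.of_forall hb)⟩

/-- Almost every time slice of `w` is locally integrable in space. -/
lemma ae_slice_locInt {T : ℝ} {w : ℝ × ℝ → ℝ} (hw : L1loc T w) :
    ∀ᵐ t ∂(volume.restrict (Icc 0 T)), LocallyIntegrable (fun x => w (t, x)) := by
  have h : ∀ n : ℕ, ∀ᵐ t ∂((volume : Measure ℝ).restrict (Icc 0 T)),
      IntegrableOn (fun x => w (t, x)) (Icc (-((n:ℝ) + 1)) ((n:ℝ) + 1)) := by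
    intro n
    have := hw.2 ((n:ℝ) + 1) (by positivity)
    unfold IntegrableOn at this
    rw [Measure.volume_eq_prod, ← Measure.prod_restrict] at this
    exact this.prod_right_ae
  filter_upwards [ae_all_iff.2 h] with t ht
  refine (locallyIntegrable_iff).2 fun K hK => ?_
  obtain ⟨r, hr⟩ := hK.isBounded.subset_closedBall 0
  obtain ⟨n, hn⟩ := exists_nat_ge r
  refine (ht n).mono_set (hr.trans fun x hx => ?_)
  rw [Metric.mem_closedBall, Real.dist_eq, sub_zero, abs_le] at hx
  constructor <;> linarith [hx.1, hx.2]

/-- The weak `x`-derivative can be tested at almost every fixed time. -/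
lemma ae_slice_weak {T : ℝ} {u w : ℝ × ℝ → ℝ} (hu : L1loc T u) (hw : L1loc T w)
    (h : HasWeakDx T u w) {ψ : ℝ → ℝ} (hψ : ContDiff ℝ (⊤ : ℕ∞) ψ) (hψc : HasCompactSupport ψ) :
    ∀ᵐ t, t ∈ Ioo 0 T → ∫ x, u (t, x) * deriv ψ x = - ∫ x, w (t, x) * ψ x := by
  have hψ' := smooth_deriv hψ
  have i1 := integrable_slice hu hψ'.continuous hψc.deriv
  have i2 := integrable_slice hw hψ.continuous hψc
  have key := isOpen_Ioo.ae_eq_zero_of_integral_contDiff_smul_eq_zero (μ := volume) (U := Ioo 0 T)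
    (f := fun t => (∫ x, u (t, x) * deriv ψ x) + ∫ x, w (t, x) * ψ x)
    ((i1.add i2).mono_set Ioo_subset_Icc_self).locallyIntegrableOn ?_
  · filter_upwards [key] with t ht hmem
    linarith [ht hmem]
  intro χ hχ hχc hχs
  have hs : Function.support χ ⊆ Ioo 0 T := (subset_tsupport χ).trans hχs
  have e := h (prodTest hχ hχc hs hψ hψc)
  simp only [prodTest] at e
  rw [pxF_prod hχ hψ, pair_prod hu hχ.continuous hψ'.continuous hψc.deriv,
    pair_prod hw hχ.continuous hψ.continuous hψc] at e
  have e2 : ∫ t, χ t • ((∫ x, u (t, x) * deriv ψ x) + ∫ x, w (t, x) * ψ x) =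
      ∫ t in Icc 0 T, (χ t * (∫ x, u (t, x) * deriv ψ x) + χ t * ∫ x, w (t, x) * ψ x) := by
    rw [setIntegral_eq_integral_of_forall_compl_eq_zero]
    · congr 1; funext t; rw [smul_eq_mul]; ring
    · intro t ht
      have : χ t = 0 := by
        by_contra h0
        exact ht (Ioo_subset_Icc_self (hs h0))
      rw [this]; ring
  rw [e2, integral_add, e]
  · ring
  · exact i1.continuousOn_mul hχ.continuous.continuousOn isCompact_Icc
  · exact i2.continuousOn_mul hχ.continuous.continuousOn isCompact_Icc

/-- The diffusive term is controlled without any bound on `u_x`: by the chain rule it can be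
integrated by parts once more, `D(u) u_x = d(u)_x` with `d` a primitive of `D`. -/
lemma diff_term {T : ℝ} {D : ℝ → ℝ} (hD : ContinuousOn D (Icc 0 1)) {C : ℝ} (hC0 : 0 ≤ C)
    (hC : ∀ v ∈ Icc (0:ℝ) 1, |D v| ≤ C) {u w : ℝ × ℝ → ℝ} (hum : Measurable u)
    (hu01 : ∀ p, u p ∈ Icc (0:ℝ) 1) (hw : L2loc T w) (h : HasWeakDx T u w)
    {χ ψ : ℝ → ℝ} (hχ : ContDiff ℝ (⊤ : ℕ∞) χ)
    (hψ : ContDiff ℝ (⊤ : ℕ∞) ψ) (hψc : HasCompactSupport ψ) :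
    |pair T (fun p => D (u p) * w p) (fun p => χ p.1 * deriv ψ p.2)| ≤
      C * (∫ x, |deriv (deriv ψ) x|) * ∫ t in Icc 0 T, |χ t| := by
  -- a bounded continuous extension of `D` to the line and its primitive
  let Dx : ℝ → ℝ := IccExtend (zero_le_one (α := ℝ)) ((Icc (0:ℝ) 1).domRestrict D)
  have hDc : Continuous Dx := (continuousOn_iff_continuous_domRestrict.1 hD).Icc_extend'
  have hDb : ∀ s, |Dx s| ≤ C := fun s => hC _ (projIcc (0:ℝ) 1 zero_le_one s).2
  have hDe : ∀ s ∈ Icc (0:ℝ) 1, Dx s = D s := fun s hs => IccExtend_of_mem _ _ hs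
  let d : ℝ → ℝ := fun s => ∫ r in (0:ℝ)..s, Dx r
  have hd : ∀ s, HasDerivAt d (Dx s) s := fun s =>
    intervalIntegral.integral_hasDerivAt_right (hDc.intervalIntegrable _ _)
      (hDc.stronglyMeasurableAtFilter _ _) hDc.continuousAt
  have hdl : LipschitzWith (Real.toNNReal C) d := by
    refine lipschitzWith_of_nnnorm_deriv_le (fun s => (hd s).differentiableAt) fun s => ?_
    rw [(hd s).deriv, ← NNReal.coe_le_coe, coe_nnnorm, Real.coe_toNNReal _ hC0]
    exact hDb s
  have hdb : ∀ s ∈ Icc (0:ℝ) 1, |d s| ≤ C := by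
    intro s hs
    have := intervalIntegral.norm_integral_le_of_norm_le_const (a := 0) (b := s) (f := Dx) (C := C)
      fun x _ => hDb x
    rw [sub_zero, abs_of_nonneg hs.1, Real.norm_eq_abs] at this
    exact this.trans (mul_le_of_le_one_right hC0 hs.2)
  have hu1 : L1loc T u := L1loc_of_bdd hum (C := 1) fun p => by
    rw [abs_of_nonneg (hu01 p).1]; exact (hu01 p).2
  have hw1 := L1loc_of_L2loc hw
  have hψ' := smooth_deriv hψ
  have hψ'' := smooth_deriv hψ'
  have e0 : (fun p => D (u p) * w p) = fun p => Dx (u p) * w p := by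
    funext p; rw [hDe _ (hu01 p)]
  have hDw : L1loc T (fun p => Dx (u p) * w p) :=
    L1loc_mul (hDc.measurable.comp hum) (fun p => hDb (u p)) hw1
  rw [e0, pair_prod hDw hχ.continuous hψ'.continuous hψc.deriv]
  have hweak : ∀ᵐ t, t ∈ Ioo 0 T → ∀ (n : ℕ) (q : ℚ),
      ∫ x, u (t, x) * deriv (mol n q) x = - ∫ x, w (t, x) * mol n q x := by
    have := ae_all_iff.2 fun n : ℕ => ae_all_iff.2 fun q : ℚ =>
      ae_slice_weak hu1 hw1 h (mol_smooth n q) (mol_cpt n q)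
    filter_upwards [this] with t ht hm n q using ht n q hm
  have hslice : ∀ᵐ t ∂(volume.restrict (Icc 0 T)),
      ∫ x, Dx (u (t, x)) * w (t, x) * deriv ψ x = - ∫ x, d (u (t, x)) * deriv (deriv ψ) x := by
    have hIoo : ∀ᵐ t ∂((volume : Measure ℝ).restrict (Icc 0 T)), t ∈ Ioo 0 T := by
      rw [← restrict_Ioo_eq_restrict_Icc]
      exact ae_restrict_mem measurableSet_Ioo
    filter_upwards [hIoo, ae_restrict_of_ae hweak, ae_slice_locInt hw1] with t h1 h2 h3
    obtain ⟨c, hc⟩ := ae_eq_prim_of_weak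
      (locInt01 (hum.comp measurable_prodMk_left) fun x => hu01 (t, x)) h3 (h2 h1)
    exact chain_one h3 hc hdl hd (hψ'.of_le (by exact_mod_cast le_top)) hψc.deriv
  have hint : Integrable (fun x => |deriv (deriv ψ) x|) :=
    (hψ''.continuous.integrable_of_hasCompactSupport hψc.deriv.deriv).abs
  rw [← integral_const_mul, ← Real.norm_eq_abs]
  refine norm_integral_le_of_norm_le ?_ ?_
  · exact (Continuous.integrableOn_Icc (by fun_prop))
  filter_upwards [hslice] with t ht
  rw [ht, norm_mul, norm_neg, mul_comm, Real.norm_eq_abs (χ t)]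
  refine mul_le_mul_of_nonneg_right ?_ (abs_nonneg _)
  rw [← integral_const_mul]
  refine norm_integral_le_of_norm_le (hint.const_mul C) (Eventually.of_forall fun x => ?_)
  rw [norm_mul, Real.norm_eq_abs, Real.norm_eq_abs]
  exact mul_le_mul_of_nonneg_right (hdb _ (hu01 _)) (abs_nonneg _)

/-! ### Smooth ramps -/

/-- A smooth nondecreasing function equal to `0` on `(-∞, a]` and to `1` on `[a + η, ∞)`. -/
def ramp (a η r : ℝ) : ℝ := Real.smoothTransition ((r - a) / η)

lemma ramp_smooth (a η : ℝ) : ContDiff ℝ (⊤ : ℕ∞) (ramp a η) :=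
  Real.smoothTransition.contDiff.comp ((contDiff_id.sub contDiff_const).div_const η)

lemma ramp_mono (a : ℝ) {η : ℝ} (hη : 0 < η) : Monotone (ramp a η) := fun x y h =>
  Real.smoothTransition.monotone (by gcongr)

lemma ramp_zero {a η r : ℝ} (hη : 0 < η) (h : r ≤ a) : ramp a η r = 0 :=
  Real.smoothTransition.zero_of_nonpos (div_nonpos_of_nonpos_of_nonneg (by linarith) hη.le)

lemma ramp_one {a η r : ℝ} (hη : 0 < η) (h : a + η ≤ r) : ramp a η r = 1 :=
  Real.smoothTransition.one_of_one_le ((one_le_div hη).2 (by linarith))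

lemma ramp_nonneg (a η r : ℝ) : 0 ≤ ramp a η r := Real.smoothTransition.nonneg _

lemma ramp_le_one (a η r : ℝ) : ramp a η r ≤ 1 := Real.smoothTransition.le_one _

lemma deriv_ramp_nonneg (a : ℝ) {η : ℝ} (hη : 0 < η) (r : ℝ) : 0 ≤ deriv (ramp a η) r :=
  (ramp_mono a hη).deriv_nonneg

lemma deriv_ramp_zero {a η r : ℝ} (hη : 0 < η) (h : r ∉ Icc a (a + η)) :
    deriv (ramp a η) r = 0 := by
  rcases lt_or_ge r a with h1 | h1
  · have : ramp a η =ᶠ[𝓝 r] fun _ => (0:ℝ) := by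
      filter_upwards [gt_mem_nhds h1] with y hy using ramp_zero hη hy.le
    rw [this.deriv_eq, deriv_const]
  · have h2 : a + η < r := by
      by_contra h3
      exact h ⟨h1, not_lt.1 h3⟩
    have : ramp a η =ᶠ[𝓝 r] fun _ => (1:ℝ) := by
      filter_upwards [lt_mem_nhds h2] with y hy using ramp_one hη hy.le
    rw [this.deriv_eq, deriv_const]

/-- Integrating against the derivative of a ramp averages the values near its foot. -/
lemma ramp_avg {a b s η κ : ℝ} (hη : 0 < η) (has : a ≤ s) (hsb : s + η ≤ b) {g : ℝ → ℝ}
    (hg : ContinuousOn g (Icc a b)) (hκ : ∀ r ∈ Icc s (s + η), |g r - g s| ≤ κ) :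
    |(∫ r in a..b, deriv (ramp s η) r * g r) - g s| ≤ κ := by
  have hab : a ≤ b := by linarith
  have hk : Continuous (deriv (ramp s η)) := (smooth_deriv (ramp_smooth s η)).continuous
  have h1 : ∫ r in a..b, deriv (ramp s η) r = 1 := by
    rw [intervalIntegral.integral_deriv_eq_sub
      (fun x _ => smooth_diff (ramp_smooth s η) x) (hk.intervalIntegrable _ _),
      ramp_one hη hsb, ramp_zero hη has, sub_zero]
  have hi1 : IntervalIntegrable (fun r => deriv (ramp s η) r * g r) volume a b := by
    apply ContinuousOn.intervalIntegrable
    rw [uIcc_of_le hab]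
    exact hk.continuousOn.mul hg
  have hi2 : IntervalIntegrable (fun r => deriv (ramp s η) r * g s) volume a b :=
    Continuous.intervalIntegrable (by fun_prop) _ _
  have h2 : (∫ r in a..b, deriv (ramp s η) r * g r) - g s =
      ∫ r in a..b, deriv (ramp s η) r * (g r - g s) := by
    simp only [mul_sub]
    rw [intervalIntegral.integral_sub hi1 hi2, intervalIntegral.integral_mul_const, h1, one_mul]
  have h3 : ‖∫ r in a..b, deriv (ramp s η) r * (g r - g s)‖ ≤
      ∫ r in a..b, deriv (ramp s η) r * κ := by
    refine intervalIntegral.norm_integral_le_of_norm_le hab (Eventually.of_forall fun r _ => ?_)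
      (Continuous.intervalIntegrable (by fun_prop) _ _)
    rw [norm_mul, Real.norm_eq_abs, Real.norm_eq_abs, abs_of_nonneg (deriv_ramp_nonneg s hη r)]
    by_cases hr : r ∈ Icc s (s + η)
    · exact mul_le_mul_of_nonneg_left (hκ r hr) (deriv_ramp_nonneg s hη r)
    · rw [deriv_ramp_zero hη hr]; simp
  rw [intervalIntegral.integral_mul_const, h1, one_mul] at h3
  rw [h2]
  exact h3

/-- A smooth approximation of the (oriented) indicator function of `[a, b]`. -/
def plateau (a b η r : ℝ) : ℝ := ramp a η r - ramp b η r

lemma plateau_smooth (a b η : ℝ) : ContDiff ℝ (⊤ : ℕ∞) (plateau a b η) :=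
  (ramp_smooth a η).sub (ramp_smooth b η)

lemma deriv_plateau (a b η r : ℝ) :
    deriv (plateau a b η) r = deriv (ramp a η) r - deriv (ramp b η) r :=
  deriv_fun_sub (smooth_diff (ramp_smooth a η) r) (smooth_diff (ramp_smooth b η) r)

lemma plateau_supp {a b η : ℝ} (hη : 0 < η) :
    Function.support (plateau a b η) ⊆ Ioo (min a b) (max a b + η) := by
  intro r hr
  constructor
  · by_contra h
    push Not at h
    apply hr
    rw [plateau, ramp_zero hη (h.trans (min_le_left _ _)),
      ramp_zero hη (h.trans (min_le_right _ _)), sub_zero]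
  · by_contra h
    push Not at h
    apply hr
    rw [plateau, ramp_one hη (by linarith [le_max_left a b]),
      ramp_one hη (by linarith [le_max_right a b]), sub_self]

lemma plateau_cpt {a b η : ℝ} (hη : 0 < η) : HasCompactSupport (plateau a b η) :=
  HasCompactSupport.intro isCompact_Icc fun r hr => by
    by_contra h0
    exact hr (Ioo_subset_Icc_self (plateau_supp hη h0))

lemma plateau_mem {a b η : ℝ} (hab : a ≤ b) (hη : 0 < η) (r : ℝ) :
    plateau a b η r ∈ Icc (0:ℝ) 1 := by
  have h1 : ramp b η r ≤ ramp a η r :=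
    Real.smoothTransition.monotone (by gcongr)
  unfold plateau
  constructor <;> linarith [ramp_nonneg b η r, ramp_le_one a η r]

lemma prim_continuous {u : ℝ → ℝ} (hu : LocallyIntegrable u) : Continuous (prim u) :=
  intervalIntegral.continuous_primitive (locInt_ii hu) 0

/-- The pairing of `u` with a smoothed indicator of `[0, x]` approximates the primitive at `x`. -/
lemma plateau_prim {u : ℝ → ℝ} (hm : Measurable u) (hb : ∀ x, u x ∈ Icc (0:ℝ) 1) (x : ℝ) {η : ℝ}
    (hη : 0 < η) : |(∫ y, u y * plateau 0 x η y) - prim u x| ≤ 2 * η := by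
  have hl := locInt01 hm hb
  have hc := prim_continuous hl
  set R := |x| + η + 1 with hR
  have hx1 := neg_abs_le x
  have hx2 := le_abs_self x
  have hx0 := abs_nonneg x
  have hs : Function.support (plateau 0 x η) ⊆ Ioo (-R) R := by
    refine (plateau_supp hη).trans (Ioo_subset_Ioo ?_ ?_)
    · apply le_min <;> linarith
    · have : max 0 x ≤ |x| := max_le hx0 hx2
      linarith
  have h1 : ContDiff ℝ 1 (plateau 0 x η) := (plateau_smooth 0 x η).of_le (by exact_mod_cast le_top)
  rw [ibp_prim hl (by linarith) h1 hs, integral_eq_interval (R := R) (by linarith)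
    (fun y hy => by rw [deriv_eq_zero_of_supp h1 hs y hy, mul_zero])]
  have hkc (a : ℝ) : Continuous (deriv (ramp a η)) := (smooth_deriv (ramp_smooth a η)).continuous
  have e : ∫ y in (-R)..R, prim u y * deriv (plateau 0 x η) y =
      (∫ y in (-R)..R, deriv (ramp 0 η) y * prim u y) -
        ∫ y in (-R)..R, deriv (ramp x η) y * prim u y := by
    rw [← intervalIntegral.integral_sub]
    · congr 1; funext y; rw [deriv_plateau]; ring
    · exact ((hkc 0).mul hc).intervalIntegrable _ _
    · exact ((hkc x).mul hc).intervalIntegrable _ _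
  have hlip (s : ℝ) : ∀ r ∈ Icc s (s + η), |prim u r - prim u s| ≤ η := by
    intro r hr
    have := prim_mono_lip hm hb hr.1
    rw [abs_of_nonneg this.1]
    linarith [hr.2]
  have a0 := ramp_avg (a := -R) (b := R) hη (by linarith) (by linarith) hc.continuousOn (hlip 0)
  have ax := ramp_avg (a := -R) (b := R) hη (by linarith) (by linarith) hc.continuousOn (hlip x)
  have z : prim u 0 = 0 := by simp [prim]
  rw [e]
  rw [z, sub_zero] at a0
  rw [abs_le] at a0 ax ⊢
  constructor <;> linarith [a0.1, a0.2, ax.1, ax.2]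

/-! ### The time modulus on sublevel sets -/

lemma strip_bound {T C : ℝ} {F : ℝ × ℝ → ℝ} {k l : ℝ → ℝ} (hk : Continuous k)
    (hl : Integrable l) (h : ∀ p, |F p| ≤ C * (k p.1 * l p.2)) :
    |∫ p in Icc 0 T ×ˢ (univ : Set ℝ), F p| ≤ C * (∫ x, l x) * ∫ t in Icc 0 T, k t := by
  rw [restrict_strip]
  have hi : Integrable (fun p : ℝ × ℝ => C * (k p.1 * l p.2))
      (((volume : Measure ℝ).restrict (Icc 0 T)).prod volume) :=
    (Integrable.mul_prod (hk.integrableOn_Icc (a := 0) (b := T)) hl).const_mul C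
  have := norm_integral_le_of_norm_le (f := F) hi (Eventually.of_forall h)
  rw [integral_const_mul, integral_prod_mul, Real.norm_eq_abs] at this
  exact this.trans_eq (by ring)

lemma sublevel_expr {T : ℝ} {f D σ : ℝ → ℝ} {M ε : ℝ} (hM : 0 < M) {u : cU T}
    (hI : Ieps f D σ T ε u ≤ ENNReal.ofReal M) :
    (L2loc T (wDx T u.toFun) ∧ HasWeakDx T u.toFun (wDx T u.toFun)) ∧
      ∀ φ : TTest T, IexprW f D σ T ε u.toFun (wDx T u.toFun) φ ≤ M := by
  have hdx : hasDx T u.toFun := by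
    by_contra hn
    unfold Ieps at hI
    rw [if_neg hn, top_le_iff] at hI
    exact ENNReal.ofReal_ne_top hI
  constructor
  · unfold wDx
    rw [dif_pos hdx]
    exact hdx.choose_spec
  · intro φ
    unfold Ieps at hI
    rw [if_pos hdx] at hI
    exact (ENNReal.ofReal_le_ofReal_iff hM.le).1
      ((le_iSup (fun φ : TTest T =>
        ENNReal.ofReal (IexprW f D σ T ε u.toFun (wDx T u.toFun) φ)) φ).trans hI)

/-- The inequality obtained by testing a sublevel of `I_ε` with `χ(t) ψ(x)`. The constants depend
on `ψ` and on bounds for the coefficients, not on `u` or `ε`. -/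
lemma sublevel_test {T : ℝ} {f D σ : ℝ → ℝ} {Cf CD Cσ : ℝ}
    (hf : ∀ v ∈ Icc (0:ℝ) 1, |f v| ≤ Cf) (hD : ContinuousOn D (Icc 0 1)) (hCD0 : 0 ≤ CD)
    (hCD : ∀ v ∈ Icc (0:ℝ) 1, |D v| ≤ CD) (hσ : ∀ v ∈ Icc (0:ℝ) 1, |σ v| ≤ Cσ)
    {M ε : ℝ} (hM : 0 < M) (hε : ε ∈ Ioc (0:ℝ) 1) {u : cU T}
    (hI : Ieps f D σ T ε u ≤ ENNReal.ofReal M) {χ ψ : ℝ → ℝ} (hχ : ContDiff ℝ (⊤ : ℕ∞) χ)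
    (hχc : HasCompactSupport χ) (hχs : Function.support χ ⊆ Ioo 0 T)
    (hψ : ContDiff ℝ (⊤ : ℕ∞) ψ) (hψc : HasCompactSupport ψ) :
    - (∫ t in Icc 0 T, deriv χ t * ∫ x, u.toFun (t, x) * ψ x) ≤
      M + (Cf * (∫ x, |deriv ψ x|) + CD * ∫ x, |deriv (deriv ψ) x|) * (∫ t in Icc 0 T, |χ t|) +
        (Cσ * ∫ x, deriv ψ x ^ 2) * ∫ t in Icc 0 T, χ t ^ 2 := by
  obtain ⟨hspec, hle⟩ := sublevel_expr hM hI
  replace hle := hle (prodTest hχ hχc hχs hψ hψc)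
  have hpx : pxF (prodTest hχ hχc hχs hψ hψc).toFun = fun p => χ p.1 * deriv ψ p.2 :=
    pxF_prod hχ hψ
  have hpt : ptF (prodTest hχ hχc hχs hψ hψc).toFun = fun p => deriv χ p.1 * ψ p.2 :=
    ptF_prod hχ hψ
  unfold IexprW at hle
  rw [hpx, hpt] at hle
  have hu1 : L1loc T u.toFun := L1loc_of_bdd u.meas (C := 1) fun p => by
    rw [abs_of_nonneg (u.mem01 p).1]; exact (u.mem01 p).2
  have hψ' := smooth_deriv hψ
  rw [pair_prod hu1 (smooth_deriv hχ).continuous hψ.continuous hψc] at hle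
  have hψi : Integrable (deriv ψ) := hψ'.continuous.integrable_of_hasCompactSupport hψc.deriv
  have hc2 : HasCompactSupport (fun x => deriv ψ x ^ 2) :=
    hψc.deriv.comp_left (g := fun y : ℝ => y ^ 2) (by norm_num)
  have hcont2 : Continuous (fun x => deriv ψ x ^ 2) := hψ'.continuous.pow 2
  have hψ2 : Integrable (fun x => deriv ψ x ^ 2) := hcont2.integrable_of_hasCompactSupport hc2
  have b1 : |pair T (fun p => f (u.toFun p)) (fun p => χ p.1 * deriv ψ p.2)| ≤
      Cf * (∫ x, |deriv ψ x|) * ∫ t in Icc 0 T, |χ t| := by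
    refine strip_bound (hχ.continuous.abs) hψi.abs fun p => ?_
    rw [abs_mul, abs_mul]
    exact mul_le_mul_of_nonneg_right (hf _ (u.mem01 p)) (by positivity)
  have b2 := diff_term hD hCD0 hCD u.meas u.mem01 hspec.1 hspec.2 hχ hψ hψc
  have b3 : |pair T (fun p => σ (u.toFun p) * (χ p.1 * deriv ψ p.2))
      (fun p => χ p.1 * deriv ψ p.2)| ≤
      Cσ * (∫ x, deriv ψ x ^ 2) * ∫ t in Icc 0 T, χ t ^ 2 := by
    refine strip_bound (hχ.continuous.pow 2) hψ2 fun p => ?_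
    have : σ (u.toFun p) * (χ p.1 * deriv ψ p.2) * (χ p.1 * deriv ψ p.2) =
      σ (u.toFun p) * (χ p.1 ^ 2 * deriv ψ p.2 ^ 2) := by ring
    rw [this, abs_mul, abs_of_nonneg (a := χ p.1 ^ 2 * deriv ψ p.2 ^ 2) (by positivity)]
    exact mul_le_mul_of_nonneg_right (hσ _ (u.mem01 p)) (by positivity)
  have b2' : |ε / 2 * pair T (fun p => D (u.toFun p) * wDx T u.toFun p)
      (fun p => χ p.1 * deriv ψ p.2)| ≤
      CD * (∫ x, |deriv (deriv ψ) x|) * ∫ t in Icc 0 T, |χ t| := by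
    rw [abs_mul, abs_of_nonneg (by linarith [hε.1])]
    refine le_trans ?_ b2
    exact mul_le_of_le_one_left (abs_nonneg _) (by linarith [hε.2])
  have c1 := (abs_le.1 b1).2
  have c2 := (abs_le.1 b2').1
  have c3 := (abs_le.1 b3).2
  have c4 : 0 ≤ Cσ * (∫ x, deriv ψ x ^ 2) * ∫ t in Icc 0 T, χ t ^ 2 := (abs_nonneg _).trans b3
  have e : (Cf * (∫ x, |deriv ψ x|) + CD * ∫ x, |deriv (deriv ψ) x|) * (∫ t in Icc 0 T, |χ t|) =
    Cf * (∫ x, |deriv ψ x|) * (∫ t in Icc 0 T, |χ t|) +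
      CD * (∫ x, |deriv (deriv ψ) x|) * ∫ t in Icc 0 T, |χ t| := by ring
  rw [e]
  linarith only [hle, c1, c2, c3, c4]

lemma slice_meas {T : ℝ} (u : cU T) (t : ℝ) : Measurable fun x => u.toFun (t, x) :=
  u.meas.comp measurable_prodMk_left

lemma slice_mul_integrable {T : ℝ} (u : cU T) (t : ℝ) {ψ : ℝ → ℝ} (hψ : Continuous ψ)
    (hψc : HasCompactSupport ψ) : Integrable (fun x => u.toFun (t, x) * ψ x) := by
  have := (locInt01 (slice_meas u t)
    fun x => u.mem01 (t, x)).integrable_smul_right_of_hasCompactSupport hψ hψc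
  simpa using this

lemma pairing_continuousOn {T : ℝ} (u : cU T) {ψ : ℝ → ℝ} (hψ : ContDiff ℝ (⊤ : ℕ∞) ψ)
    (hψc : HasCompactSupport ψ) :
    ContinuousOn (fun t => ∫ x, u.toFun (t, x) * ψ x) (Icc 0 T) := by
  rw [Metric.continuousOn_iff]
  intro t₀ ht₀ η hη
  obtain ⟨δ, hδ, h⟩ := pairing_lt_of_dU hψ hψc hη
  obtain ⟨ζ, hζ, h'⟩ := u.cont t₀ ht₀ δ hδ
  refine ⟨ζ, hζ, fun t ht htt => ?_⟩
  have := h _ _ (slice_meas u t) (fun x => u.mem01 (t, x)) (slice_meas u t₀)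
    (fun x => u.mem01 (t₀, x)) (h' t ht htt)
  rw [Real.dist_eq, ← integral_sub (slice_mul_integrable u t hψ.continuous hψc)
    (slice_mul_integrable u t₀ hψ.continuous hψc)]
  simpa only [sub_mul] using this

/-- Localizing an integrated inequality in time: testing with smoothed indicators of `[s, t]` times
a constant `lam` bounds the increments of a continuous function. -/
lemma increment_le {T : ℝ} {g : ℝ → ℝ} (hg : ContinuousOn g (Icc 0 T)) {M C₁ C₂ : ℝ}
    (hC₁ : 0 ≤ C₁) (hC₂ : 0 ≤ C₂)
    (h : ∀ χ : ℝ → ℝ, ContDiff ℝ (⊤ : ℕ∞) χ → HasCompactSupport χ →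
      Function.support χ ⊆ Ioo 0 T → - (∫ t in Icc 0 T, deriv χ t * g t) ≤
        M + C₁ * (∫ t in Icc 0 T, |χ t|) + C₂ * ∫ t in Icc 0 T, χ t ^ 2)
    {s t : ℝ} (hs : 0 < s) (hst : s ≤ t) (ht : t < T) (lam : ℝ) :
    lam * (g t - g s) ≤ M + (C₁ * |lam| + C₂ * lam ^ 2) * (t - s) := by
  set A := C₁ * |lam| + C₂ * lam ^ 2 with hA
  have hA0 : 0 ≤ A := by positivity
  refine le_of_forall_pos_le_add fun e he => ?_
  set B := A + 2 * |lam| with hB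
  have hB0 : 0 ≤ B := by positivity
  set κ := e / (B + 1) with hκ
  have hκ0 : 0 < κ := by positivity
  -- the width `η` of the ramps is governed by the continuity of `g` at `s` and `t`
  obtain ⟨δs, hδs, hgs⟩ := Metric.continuousOn_iff.1 hg s ⟨hs.le, by linarith⟩ κ hκ0
  obtain ⟨δt, hδt, hgt⟩ := Metric.continuousOn_iff.1 hg t ⟨by linarith, ht.le⟩ κ hκ0
  obtain ⟨η, hη, hlt⟩ : ∃ η > 0, η < min (min δs δt) (min κ (T - t)) :=
    exists_between (by simp only [lt_min_iff]; exact ⟨⟨hδs, hδt⟩, hκ0, by linarith⟩)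
  simp only [lt_min_iff] at hlt
  obtain ⟨⟨h1, h2⟩, h3, h4⟩ := hlt
  have ks : ∀ r ∈ Icc s (s + η), |g r - g s| ≤ κ := fun r hr =>
    (hgs r ⟨by linarith [hr.1], by linarith [hr.2]⟩
      (by rw [Real.dist_eq, abs_of_nonneg (by linarith [hr.1])]; linarith [hr.2])).le
  have kt : ∀ r ∈ Icc t (t + η), |g r - g t| ≤ κ := fun r hr =>
    (hgt r ⟨by linarith [hr.1], by linarith [hr.2]⟩
      (by rw [Real.dist_eq, abs_of_nonneg (by linarith [hr.1])]; linarith [hr.2])).le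
  have avg_s := ramp_avg hη hs.le (by linarith) hg ks
  have avg_t := ramp_avg hη (by linarith) (by linarith) hg kt
  have hps : Function.support (plateau s t η) ⊆ Ioo 0 T := by
    refine (plateau_supp hη).trans (Ioo_subset_Ioo ?_ ?_)
    · rw [min_eq_left hst]; exact hs.le
    · rw [max_eq_right hst]; linarith
  have key := h (fun r => lam * plateau s t η r) (contDiff_const.mul (plateau_smooth s t η))
    (plateau_cpt hη).mul_left (fun r hr => hps (right_ne_zero_of_mul hr))
  have hT0 : 0 ≤ T := by linarith
  have hmem := plateau_mem hst hη
  have hpc : Continuous (plateau s t η) := (plateau_smooth s t η).continuous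
  have hpi : ∫ r in Icc 0 T, plateau s t η r ≤ t - s + η := by
    have e1 : ∫ r in Icc 0 T, plateau s t η r ≤
        ∫ r in Icc 0 T, (Icc s (t + η)).indicator (fun _ => (1:ℝ)) r := by
      refine integral_mono hpc.integrableOn_Icc
        ((integrableOn_const (by simp)).indicator measurableSet_Icc) fun r => ?_
      by_cases hr : r ∈ Icc s (t + η)
      · rw [indicator_of_mem hr]; exact (hmem r).2
      · rw [indicator_of_notMem hr]
        refine le_of_eq (by_contra fun h0 => hr ?_)
        have := plateau_supp hη h0
        rw [min_eq_left hst, max_eq_right hst] at this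
        exact Ioo_subset_Icc_self this
    have e2 : Icc (0:ℝ) T ∩ Icc s (t + η) = Icc s (t + η) :=
      inter_eq_right.2 (Icc_subset_Icc hs.le (by linarith))
    rw [setIntegral_indicator measurableSet_Icc, e2] at e1
    simp only [integral_const, MeasurableSet.univ, measureReal_restrict_apply, univ_inter,
      Real.volume_real_Icc, smul_eq_mul, mul_one] at e1
    rw [max_eq_left (by linarith)] at e1
    linarith
  have i1 : ∫ r in Icc 0 T, |lam * plateau s t η r| ≤ |lam| * (t - s + η) := by
    have : ∀ r, |lam * plateau s t η r| = |lam| * plateau s t η r := fun r => by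
      rw [abs_mul, abs_of_nonneg (hmem r).1]
    simp only [this]
    rw [integral_const_mul]
    exact mul_le_mul_of_nonneg_left hpi (abs_nonneg _)
  have i2 : ∫ r in Icc 0 T, (lam * plateau s t η r) ^ 2 ≤ lam ^ 2 * (t - s + η) := by
    simp only [mul_pow]
    rw [integral_const_mul]
    refine mul_le_mul_of_nonneg_left (le_trans ?_ hpi) (sq_nonneg _)
    refine integral_mono (hpc.pow 2).integrableOn_Icc hpc.integrableOn_Icc fun r => ?_
    show plateau s t η r ^ 2 ≤ plateau s t η r
    nlinarith [(hmem r).1, (hmem r).2]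
  have hkc (a : ℝ) : Continuous (deriv (ramp a η)) := (smooth_deriv (ramp_smooth a η)).continuous
  have hii (a : ℝ) : IntervalIntegrable (fun r => deriv (ramp a η) r * g r) volume 0 T := by
    apply ContinuousOn.intervalIntegrable
    rw [uIcc_of_le hT0]
    exact (hkc a).continuousOn.mul hg
  have i3 : ∫ r in Icc 0 T, deriv (fun r => lam * plateau s t η r) r * g r =
      lam * ((∫ r in (0:ℝ)..T, deriv (ramp s η) r * g r) -
        ∫ r in (0:ℝ)..T, deriv (ramp t η) r * g r) := by
    rw [integral_Icc_eq_integral_Ioc, ← intervalIntegral.integral_of_le hT0,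
      ← intervalIntegral.integral_sub (hii s) (hii t), ← intervalIntegral.integral_const_mul]
    congr 1; funext r
    rw [deriv_const_mul _ (smooth_diff (plateau_smooth s t η) r), deriv_plateau]
    ring
  rw [i3] at key
  set Gs := ∫ r in (0:ℝ)..T, deriv (ramp s η) r * g r
  set Gt := ∫ r in (0:ℝ)..T, deriv (ramp t η) r * g r
  have j1 : lam * (g t - g s) ≤ - (lam * (Gs - Gt)) + 2 * |lam| * κ := by
    have : |(g t - g s) - (Gt - Gs)| ≤ 2 * κ := by
      rw [abs_le] at avg_s avg_t ⊢
      constructor <;> linarith [avg_s.1, avg_s.2, avg_t.1, avg_t.2]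
    have h5 : lam * ((g t - g s) - (Gt - Gs)) ≤ |lam| * (2 * κ) :=
      (le_abs_self _).trans (by rw [abs_mul]; gcongr)
    linarith
  have j2 : C₁ * (∫ r in Icc 0 T, |lam * plateau s t η r|) ≤ C₁ * (|lam| * (t - s + η)) := by
    gcongr
  have j3 : C₂ * (∫ r in Icc 0 T, (lam * plateau s t η r) ^ 2) ≤ C₂ * (lam ^ 2 * (t - s + η)) := by
    gcongr
  have j4 : A * η ≤ A * κ := by gcongr
  have j5 : B * κ ≤ e := by
    rw [hκ, ← mul_div_assoc, div_le_iff₀ (by positivity)]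
    nlinarith
  have j6 : C₁ * (|lam| * (t - s + η)) + C₂ * (lam ^ 2 * (t - s + η)) = A * (t - s) + A * η := by
    rw [hA]; ring
  have j7 : B * κ = A * κ + 2 * |lam| * κ := by rw [hB]; ring
  linarith

/-- Equicontinuity in time of the pairing with a fixed test function, uniformly over the sublevel
sets of all the functionals `I_ε`. -/
lemma modulus_pairing {T : ℝ} (hT : 0 < T) {f D σ : ℝ → ℝ} {Cf CD Cσ : ℝ}
    (hf : ∀ v ∈ Icc (0:ℝ) 1, |f v| ≤ Cf) (hD : ContinuousOn D (Icc 0 1))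
    (hCD : ∀ v ∈ Icc (0:ℝ) 1, |D v| ≤ CD) (hσ : ∀ v ∈ Icc (0:ℝ) 1, |σ v| ≤ Cσ)
    {M : ℝ} (hM : 0 < M) {ψ : ℝ → ℝ} (hψ : ContDiff ℝ (⊤ : ℕ∞) ψ) (hψc : HasCompactSupport ψ)
    {δ : ℝ} (hδ : 0 < δ) : ∃ ζ > (0:ℝ), ∀ ε ∈ Ioc (0:ℝ) 1, ∀ u : cU T,
      Ieps f D σ T ε u ≤ ENNReal.ofReal M → ∀ s ∈ Icc 0 T, ∀ t ∈ Icc 0 T, |t - s| ≤ ζ →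
      |(∫ x, u.toFun (t, x) * ψ x) - ∫ x, u.toFun (s, x) * ψ x| ≤ δ := by
  have h0 : (0:ℝ) ∈ Icc (0:ℝ) 1 := by simp
  have hCf0 : 0 ≤ Cf := (abs_nonneg _).trans (hf 0 h0)
  have hCD0 : 0 ≤ CD := (abs_nonneg _).trans (hCD 0 h0)
  have hCσ0 : 0 ≤ Cσ := (abs_nonneg _).trans (hσ 0 h0)
  set C₁ := Cf * (∫ x, |deriv ψ x|) + CD * ∫ x, |deriv (deriv ψ) x| with hC₁
  set C₂ := Cσ * ∫ x, deriv ψ x ^ 2 with hC₂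
  have hC₁0 : 0 ≤ C₁ := add_nonneg (mul_nonneg hCf0 (integral_nonneg fun x => abs_nonneg _))
    (mul_nonneg hCD0 (integral_nonneg fun x => abs_nonneg _))
  have hC₂0 : 0 ≤ C₂ := mul_nonneg hCσ0 (integral_nonneg fun x => sq_nonneg _)
  -- the amplitude making the cost contribution `M / K` equal to `δ / 2`
  set K := 2 * M / δ with hK
  have hK0 : 0 < K := by positivity
  refine ⟨δ / 2 / (C₁ + C₂ * K + 1), by positivity, ?_⟩
  intro ε hε u hI
  set g : ℝ → ℝ := fun t => ∫ x, u.toFun (t, x) * ψ x with hg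
  have hgc : ContinuousOn g (Icc 0 T) := pairing_continuousOn u hψ hψc
  have htest : ∀ χ : ℝ → ℝ, ContDiff ℝ (⊤ : ℕ∞) χ → HasCompactSupport χ →
      Function.support χ ⊆ Ioo 0 T → - (∫ t in Icc 0 T, deriv χ t * g t) ≤
        M + C₁ * (∫ t in Icc 0 T, |χ t|) + C₂ * ∫ t in Icc 0 T, χ t ^ 2 :=
    fun χ h1 h2 h3 => sublevel_test hf hD hCD0 hCD hσ hM hε hI h1 h2 h3 hψ hψc
  set ζ := δ / 2 / (C₁ + C₂ * K + 1) with hζ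
  have hord : ∀ s t, 0 < s → s ≤ t → t < T → t - s ≤ ζ → |g t - g s| ≤ δ := by
    intro s t hs hst ht hts
    have p1 := increment_le hgc hC₁0 hC₂0 htest hs hst ht K
    have p2 := increment_le hgc hC₁0 hC₂0 htest hs hst ht (-K)
    rw [abs_neg, abs_of_pos hK0] at p2
    rw [abs_of_pos hK0] at p1
    have h3 : (C₁ + C₂ * K) * (t - s) ≤ δ / 2 := by
      have : (C₁ + C₂ * K + 1) * ζ = δ / 2 := by rw [hζ]; field_simp
      have h4 : (C₁ + C₂ * K) * (t - s) ≤ (C₁ + C₂ * K) * ζ := by gcongr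
      have : 0 < ζ := by positivity
      linarith
    have h5 : K * δ = 2 * M := by rw [hK]; field_simp
    have h6 : (C₁ * K + C₂ * K ^ 2) * (t - s) ≤ K * (δ / 2) := by
      have : (C₁ * K + C₂ * K ^ 2) * (t - s) = K * ((C₁ + C₂ * K) * (t - s)) := by ring
      rw [this]; gcongr
    rw [abs_le]
    constructor
    · refine le_of_mul_le_mul_left ?_ hK0
      have : (-K) ^ 2 = K ^ 2 := by ring
      rw [this] at p2
      linarith
    · refine le_of_mul_le_mul_left ?_ hK0
      linarith
  have hsym : ∀ s ∈ Ioo 0 T, ∀ t ∈ Ioo 0 T, |t - s| ≤ ζ → |g t - g s| ≤ δ := by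
    intro s hs t ht hts
    rw [abs_le] at hts
    rcases le_total s t with h | h
    · exact hord s t hs.1 h ht.2 hts.2
    · rw [abs_sub_comm]
      exact hord t s ht.1 h hs.2 (by linarith)
  intro s hs t ht hts
  -- approach the closed interval from the open one along segments towards its midpoint
  let P : ℝ → ℝ → ℝ := fun r θ => (1 - θ) * r + θ * (T / 2)
  have hP : ∀ r ∈ Icc 0 T, ∀ θ ∈ Ioo (0:ℝ) 1, P r θ ∈ Ioo 0 T := by
    intro r hr θ hθ
    have q1 : 0 < θ * T := mul_pos hθ.1 hT
    have q2 : 0 ≤ (1 - θ) * r := mul_nonneg (by linarith [hθ.2]) hr.1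
    have q3 : (1 - θ) * r ≤ (1 - θ) * T := mul_le_mul_of_nonneg_left hr.2 (by linarith [hθ.2])
    constructor
    · simp only [P]; linarith
    · simp only [P]; linarith
  have hev : ∀ᶠ θ in 𝓝[>] (0:ℝ), θ ∈ Ioo (0:ℝ) 1 := Ioo_mem_nhdsGT one_pos
  have hlim : ∀ r ∈ Icc 0 T, Tendsto (fun θ => g (P r θ)) (𝓝[>] 0) (𝓝 (g r)) := by
    intro r hr
    have h1 : Tendsto (P r) (𝓝[>] 0) (𝓝 r) := by
      have : Continuous (P r) := by fun_prop
      have h2 := this.tendsto 0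
      simp only [P] at h2
      simp only [sub_zero, one_mul, zero_mul, add_zero] at h2
      exact h2.mono_left nhdsWithin_le_nhds
    refine (hgc r hr).tendsto.comp (tendsto_nhdsWithin_iff.2 ⟨h1, ?_⟩)
    filter_upwards [hev] with θ hθ using Ioo_subset_Icc_self (hP r hr θ hθ)
  refine le_of_tendsto ((hlim t ht).sub (hlim s hs)).abs ?_
  filter_upwards [hev] with θ hθ
  refine hsym _ (hP s hs θ hθ) _ (hP t ht θ hθ) ?_
  have : P t θ - P s θ = (1 - θ) * (t - s) := by simp only [P]; ring
  rw [this, abs_mul, abs_of_nonneg (by linarith [hθ.2])]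
  exact (mul_le_of_le_one_left (abs_nonneg _) (by linarith [hθ.1])).trans hts

/-- Equicontinuity in time of the spatial primitives over sublevel sets. -/
lemma modulus_prim {T : ℝ} (hT : 0 < T) {f D σ : ℝ → ℝ} {Cf CD Cσ : ℝ}
    (hf : ∀ v ∈ Icc (0:ℝ) 1, |f v| ≤ Cf) (hD : ContinuousOn D (Icc 0 1))
    (hCD : ∀ v ∈ Icc (0:ℝ) 1, |D v| ≤ CD) (hσ : ∀ v ∈ Icc (0:ℝ) 1, |σ v| ≤ Cσ)
    {M : ℝ} (hM : 0 < M) (x : ℝ) {δ : ℝ} (hδ : 0 < δ) :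
    ∃ ζ > (0:ℝ), ∀ ε ∈ Ioc (0:ℝ) 1, ∀ u : cU T,
      Ieps f D σ T ε u ≤ ENNReal.ofReal M → ∀ s ∈ Icc 0 T, ∀ t ∈ Icc 0 T, |t - s| ≤ ζ →
      |prim (fun y => u.toFun (t, y)) x - prim (fun y => u.toFun (s, y)) x| ≤ δ := by
  have hη : 0 < δ / 8 := by positivity
  obtain ⟨ζ, hζ, h⟩ := modulus_pairing hT hf hD hCD hσ hM (plateau_smooth 0 x (δ / 8))
    (plateau_cpt hη) (half_pos hδ)
  refine ⟨ζ, hζ, fun ε hε u hI s hs t ht hts => ?_⟩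
  have h1 := h ε hε u hI s hs t ht hts
  have h2 := plateau_prim (slice_meas u s) (fun y => u.mem01 (s, y)) x hη
  have h3 := plateau_prim (slice_meas u t) (fun y => u.mem01 (t, y)) x hη
  rw [abs_le] at h1 h2 h3 ⊢
  constructor <;> linarith [h1.1, h1.2, h2.1, h2.2, h3.1, h3.2]

/-! ### Compactness for primitives and construction of the limit -/

/-- Space-time functions that look like `(t, x) ↦ ∫₀ˣ u(t, y) dy` with `0 ≤ u ≤ 1`, and whose
modulus of continuity in time at the point `x` is controlled by `ζ x`. -/
def PrimClass (ζ : ℝ → ℝ → ℝ) (F : ℝ × ℝ → ℝ) : Prop :=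
  (∀ t, F (t, 0) = 0) ∧
  (∀ t x y, x ≤ y → 0 ≤ F (t, y) - F (t, x) ∧ F (t, y) - F (t, x) ≤ y - x) ∧
  ∀ x δ, 0 < δ → ∀ s t, |t - s| ≤ ζ x δ → |F (t, x) - F (s, x)| ≤ δ

lemma PrimClass.lip {ζ : ℝ → ℝ → ℝ} {F : ℝ × ℝ → ℝ} (hF : PrimClass ζ F) (t x y : ℝ) :
    |F (t, y) - F (t, x)| ≤ |y - x| := by
  rcases le_total x y with h | h
  · have := hF.2.1 t x y h
    rw [abs_of_nonneg this.1, abs_of_nonneg (sub_nonneg.2 h)]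
    exact this.2
  · have := hF.2.1 t y x h
    rw [abs_sub_comm, abs_sub_comm y x, abs_of_nonneg this.1, abs_of_nonneg (sub_nonneg.2 h)]
    exact this.2

lemma PrimClass.equicont {ζ : ℝ → ℝ → ℝ} (hζ : ∀ x δ, 0 < δ → 0 < ζ x δ) (p : ℝ × ℝ) {ε : ℝ}
    (hε : 0 < ε) : ∃ η > 0, ∀ q, dist q p < η → ∀ F, PrimClass ζ F → |F p - F q| < ε := by
  obtain ⟨t₀, x₀⟩ := p
  refine ⟨min (ζ x₀ (ε / 3)) (ε / 3), lt_min (hζ _ _ (by positivity)) (by positivity), ?_⟩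
  rintro ⟨t, x⟩ hq F hF
  rw [Prod.dist_eq, max_lt_iff, lt_min_iff, lt_min_iff, Real.dist_eq, Real.dist_eq] at hq
  have h1 := hF.lip t x₀ x
  have h2 := hF.2.2 x₀ (ε / 3) (by positivity) t₀ t hq.1.1.le
  have h3 := hq.2.2
  have h4 : F (t₀, x₀) - F (t, x) = -(F (t, x) - F (t, x₀)) + -(F (t, x₀) - F (t₀, x₀)) := by ring
  rw [h4]
  refine (abs_add_le _ _).trans_lt ?_
  rw [abs_neg, abs_neg]
  simp only at h3
  linarith

lemma PrimClass.continuous {ζ : ℝ → ℝ → ℝ} (hζ : ∀ x δ, 0 < δ → 0 < ζ x δ) {F : ℝ × ℝ → ℝ}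
    (hF : PrimClass ζ F) : Continuous F := by
  rw [Metric.continuous_iff]
  intro p ε hε
  obtain ⟨η, hη, h⟩ := PrimClass.equicont hζ p hε
  refine ⟨η, hη, fun q hq => ?_⟩
  rw [dist_comm, Real.dist_eq]
  exact h q hq F hF

lemma isClosed_primClass (ζ : ℝ → ℝ → ℝ) : IsClosed {F : ℝ × ℝ → ℝ | PrimClass ζ F} := by
  have e : ∀ p : ℝ × ℝ, Continuous fun F : ℝ × ℝ → ℝ => F p := fun p => continuous_apply p
  simp only [PrimClass, ofPred_and, ofPred_forall]
  refine (isClosed_iInter fun t => isClosed_eq (e _) continuous_const).inter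
    (IsClosed.inter ?_ ?_)
  · refine isClosed_iInter fun t => isClosed_iInter fun x => isClosed_iInter fun y =>
      isClosed_iInter fun _ => ?_
    exact (isClosed_le continuous_const ((e _).sub (e _))).inter
      (isClosed_le ((e _).sub (e _)) continuous_const)
  · refine isClosed_iInter fun x => isClosed_iInter fun δ => isClosed_iInter fun _ =>
      isClosed_iInter fun s => isClosed_iInter fun t => isClosed_iInter fun _ => ?_
    exact isClosed_le ((e _).sub (e _)).abs continuous_const

/-- Arzelà–Ascoli for `PrimClass`. -/
lemma primClass_compact {ζ : ℝ → ℝ → ℝ} (hζ : ∀ x δ, 0 < δ → 0 < ζ x δ) :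
    IsCompact {F : C(ℝ × ℝ, ℝ) | PrimClass ζ F} := by
  refine ArzelaAscoli.isCompact_of_equicontinuous _ ?_ ?_
  · have him : ContinuousMap.toFun '' {F : C(ℝ × ℝ, ℝ) | PrimClass ζ F}
        = {F : ℝ × ℝ → ℝ | PrimClass ζ F} := by
      ext F
      constructor
      · rintro ⟨G, hG, rfl⟩
        exact hG
      · intro hF
        exact ⟨⟨F, hF.continuous hζ⟩, hF, rfl⟩
    rw [him]
    refine (isCompact_univ_pi fun p : ℝ × ℝ => isCompact_Icc (a := -|p.2|) (b := |p.2|)).of_isClosed_subset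
      (isClosed_primClass ζ) ?_
    rintro F hF ⟨t, x⟩ -
    have h := hF.lip t 0 x
    rw [hF.1 t, sub_zero, sub_zero] at h
    exact abs_le.1 h
  · intro p
    rw [Metric.equicontinuousAt_iff]
    intro ε hε
    obtain ⟨η, hη, h⟩ := PrimClass.equicont hζ p hε
    exact ⟨η, hη, fun q hq F => by rw [Real.dist_eq]; exact h q hq F.1 F.2⟩

/-- The spatial derivative `∂ₓF`, with the value `0` where it does not exist. -/
def dxOf (F : ℝ × ℝ → ℝ) : ℝ × ℝ → ℝ := fun p => deriv (fun x => F (p.1, x)) p.2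

lemma dxOf_meas {F : ℝ × ℝ → ℝ} (hF : Continuous F) : Measurable (dxOf F) :=
  measurable_deriv_with_param (f := fun t x => F (t, x)) hF

lemma PrimClass.lipschitz {ζ : ℝ → ℝ → ℝ} {F : ℝ × ℝ → ℝ} (hF : PrimClass ζ F) (t : ℝ) :
    LipschitzWith 1 fun x => F (t, x) :=
  LipschitzWith.of_dist_le_mul fun x y => by
    rw [Real.dist_eq, Real.dist_eq, NNReal.coe_one, one_mul]
    exact hF.lip t y x

lemma dxOf_mem {ζ : ℝ → ℝ → ℝ} {F : ℝ × ℝ → ℝ} (hF : PrimClass ζ F) (p : ℝ × ℝ) :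
    dxOf F p ∈ Icc (0:ℝ) 1 := by
  have hm : Monotone fun x => F (p.1, x) := fun x y h => sub_nonneg.1 (hF.2.1 p.1 x y h).1
  have h1 : ‖deriv (fun x => F (p.1, x)) p.2‖ ≤ (1 : NNReal) :=
    norm_deriv_le_of_lipschitz (hF.lipschitz p.1)
  exact ⟨hm.deriv_nonneg, (le_abs_self _).trans (by simpa [dxOf] using h1)⟩

lemma prim_dxOf {ζ : ℝ → ℝ → ℝ} {F : ℝ × ℝ → ℝ} (hF : PrimClass ζ F) (t x : ℝ) :
    prim (fun y => dxOf F (t, y)) x = F (t, x) := by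
  have h : AbsolutelyContinuousOnInterval (fun y => F (t, y)) 0 x :=
    ((hF.lipschitz t).lipschitzOnWith (s := uIcc 0 x)).absolutelyContinuousOnInterval
  have := h.integral_deriv_eq_sub
  rw [hF.1 t, sub_zero] at this
  exact this

/-- The element of `𝒰` whose primitive is a given `PrimClass` function. -/
def limitOf {ζ : ℝ → ℝ → ℝ} (hζ : ∀ x δ, 0 < δ → 0 < ζ x δ) {F : ℝ × ℝ → ℝ}
    (hF : PrimClass ζ F) (T : ℝ) : cU T where
  toFun := dxOf F
  meas := dxOf_meas (hF.continuous hζ)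
  mem01 := dxOf_mem hF
  cont := by
    intro t₀ ht₀ δ hδ
    obtain ⟨N, hN, κ, hκ, h⟩ := dU_le_of_prim (half_pos hδ)
    have hc : IsCompact (Icc (0:ℝ) T ×ˢ Icc (-N) N) := isCompact_Icc.prod isCompact_Icc
    have hu := hc.uniformContinuousOn_of_continuous (hF.continuous hζ).continuousOn
    obtain ⟨η, hη, hu⟩ := Metric.uniformContinuousOn_iff.1 hu κ hκ
    refine ⟨η, hη, fun t ht htt => ?_⟩
    have hm := dxOf_meas (hF.continuous hζ)
    refine (h _ _ (hm.comp measurable_prodMk_left) (fun x => dxOf_mem hF _)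
      (hm.comp measurable_prodMk_left) (fun x => dxOf_mem hF _) ?_).trans_lt (half_lt_self hδ)
    intro x hx
    change |prim (fun y => dxOf F (t, y)) x - prim (fun y => dxOf F (t₀, y)) x| ≤ κ
    rw [prim_dxOf hF, prim_dxOf hF, ← Real.dist_eq]
    refine (hu (t, x) ⟨ht, hx⟩ (t₀, x) ⟨ht₀, hx⟩ ?_).le
    rw [Prod.dist_eq, dist_self, Real.dist_eq]
    exact max_lt htt hη

/-- The elements of `𝒰` whose primitives have time modulus of continuity `ζ`. -/
def modSet (T : ℝ) (ζ : ℝ → ℝ → ℝ) : Set (cU T) :=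
  {u | ∀ x δ, 0 < δ → ∀ s ∈ Icc 0 T, ∀ t ∈ Icc 0 T, |t - s| ≤ ζ x δ →
    |prim (fun y => u.toFun (t, y)) x - prim (fun y => u.toFun (s, y)) x| ≤ δ}

/-- The primitive of `u`, extended to all times by freezing it outside `[0, T]`. -/
def primExt {T : ℝ} (u : cU T) : ℝ × ℝ → ℝ :=
  fun p => prim (fun y => u.toFun (max 0 (min T p.1), y)) p.2

lemma clamp_mem {T : ℝ} (hT : 0 < T) (t : ℝ) : max 0 (min T t) ∈ Icc 0 T :=
  ⟨le_max_left _ _, max_le hT.le (min_le_left _ _)⟩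

lemma clamp_eq {T t : ℝ} (ht : t ∈ Icc 0 T) : max 0 (min T t) = t := by
  rw [min_eq_right ht.2, max_eq_right ht.1]

lemma primExt_class {T : ℝ} (hT : 0 < T) {ζ : ℝ → ℝ → ℝ} {u : cU T} (hu : u ∈ modSet T ζ) :
    PrimClass ζ (primExt u) := by
  refine ⟨fun t => by simp [primExt, prim], fun t x y h =>
    prim_mono_lip (slice_meas u _) (fun z => u.mem01 _) h, fun x δ hδ s t hst => ?_⟩
  refine hu x δ hδ _ (clamp_mem hT s) _ (clamp_mem hT t) (le_trans ?_ hst)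
  have h1 := abs_max_sub_max_le_max 0 (min T t) 0 (min T s)
  have h2 := abs_min_sub_min_le_max T t T s
  rw [sub_self, abs_zero, max_eq_right (abs_nonneg (min T t - min T s))] at h1
  rw [sub_self, abs_zero, max_eq_right (abs_nonneg (t - s))] at h2
  exact h1.trans h2

lemma modSet_seqCompact {T : ℝ} (hT : 0 < T) {ζ : ℝ → ℝ → ℝ}
    (hζ : ∀ x δ, 0 < δ → 0 < ζ x δ) : SeqCompactIn (dcU T) (modSet T ζ) := by
  intro u hu
  let G : ℕ → C(ℝ × ℝ, ℝ) := fun n => ⟨primExt (u n), (primExt_class hT (hu n)).continuous hζ⟩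
  obtain ⟨F, hF, s, hs, hlim⟩ := (primClass_compact hζ).tendsto_subseq (x := G)
    fun n => primExt_class hT (hu n)
  have hF' : PrimClass ζ F := hF
  refine ⟨limitOf hζ hF' T, ?_, s, hs, ?_⟩
  · intro x δ hδ r _ t _ hrt
    change |prim (fun y => dxOf F (t, y)) x - prim (fun y => dxOf F (r, y)) x| ≤ δ
    rw [prim_dxOf hF', prim_dxOf hF']
    exact hF'.2.2 x δ hδ r t hrt
  · rw [Metric.tendsto_atTop]
    intro ε hε
    obtain ⟨N, hN, κ, hκ, h⟩ := dU_le_of_prim (half_pos hε)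
    have hc : IsCompact (Icc (0:ℝ) T ×ˢ Icc (-N) N) := isCompact_Icc.prod isCompact_Icc
    have hunif := ContinuousMap.tendsto_iff_forall_isCompact_tendstoUniformlyOn.1 hlim _ hc
    obtain ⟨n₀, hn₀⟩ := eventually_atTop.1 (Metric.tendstoUniformlyOn_iff.1 hunif κ hκ)
    refine ⟨n₀, fun n hn => ?_⟩
    have hb : ∀ r ∈ {r : ℝ | ∃ t ∈ Icc (0:ℝ) T, r = dU (fun x => (u (s n)).toFun (t, x))
        (fun x => (limitOf hζ hF' T).toFun (t, x))}, r ≤ ε / 2 := by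
      rintro r ⟨t, ht, rfl⟩
      refine h _ _ (slice_meas _ t) (fun x => (u (s n)).mem01 _) (slice_meas _ t)
        (fun x => (limitOf hζ hF' T).mem01 _) fun x hx => ?_
      have h1 := hn₀ n hn (t, x) ⟨ht, hx⟩
      rw [dist_comm, Real.dist_eq] at h1
      change |primExt (u (s n)) (t, x) - F (t, x)| < κ at h1
      simp only [primExt, clamp_eq ht] at h1
      change |_ - prim (fun y => dxOf F (t, y)) x| ≤ κ
      rw [prim_dxOf hF']
      exact h1.le
    have hle : dcU T (u (s n)) (limitOf hζ hF' T) ≤ ε / 2 := Real.sSup_le hb (by positivity)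
    have hnn : 0 ≤ dcU T (u (s n)) (limitOf hζ hF' T) := by
      refine Real.sSup_nonneg ?_
      rintro r ⟨t, -, rfl⟩
      exact dU_nonneg _ _
    rw [Real.dist_eq, sub_zero, abs_of_nonneg hnn]
    linarith

/-- The sequence `{I_ε}_{ε ∈ (0,1]}` is equicoercive on `(𝒰, d_𝒰)`. -/
theorem equicoercive_Ieps (T : ℝ) (hT : 0 < T) (f D σ : ℝ → ℝ)
    (hf : ∃ C : NNReal, LipschitzOnWith C f (Icc 0 1))
    (hD : ContinuousOn D (Icc 0 1)) (hσ : ContinuousOn σ (Icc 0 1))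
    (hDpos : ∃ c > 0, ∀ v ∈ Icc (0:ℝ) 1, c ≤ D v)
    (hσpos : ∀ v ∈ Ioo (0:ℝ) 1, 0 < σ v) :
    Equicoercive (dcU T) (fun ε => Ieps f D σ T ε) := by
  intro M hM
  obtain ⟨C, hC⟩ := hf
  obtain ⟨Cf, hCf⟩ := isCompact_Icc.exists_bound_of_continuousOn hC.continuousOn
  obtain ⟨CD, hCD⟩ := isCompact_Icc.exists_bound_of_continuousOn hD
  obtain ⟨Cσ, hCσ⟩ := isCompact_Icc.exists_bound_of_continuousOn hσ
  have key : ∀ x δ : ℝ, ∃ ζ : ℝ, 0 < δ → 0 < ζ ∧ ∀ ε ∈ Ioc (0:ℝ) 1, ∀ u : cU T,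
      Ieps f D σ T ε u ≤ ENNReal.ofReal M → ∀ s ∈ Icc 0 T, ∀ t ∈ Icc 0 T, |t - s| ≤ ζ →
      |prim (fun y => u.toFun (t, y)) x - prim (fun y => u.toFun (s, y)) x| ≤ δ := by
    intro x δ
    by_cases hδ : 0 < δ
    · obtain ⟨ζ, h1, h2⟩ := modulus_prim hT hCf hD hCD hCσ hM x hδ
      exact ⟨ζ, fun _ => ⟨h1, h2⟩⟩
    · exact ⟨0, fun h => absurd h hδ⟩
  choose ζ hζ using key
  refine ⟨modSet T ζ, modSet_seqCompact hT fun x δ hδ => (hζ x δ hδ).1, ?_⟩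
  intro ε hε u hu x δ hδ
  exact (hζ x δ hδ).2 ε hε u hu

end GammaSCL
end
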